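/- arXiv:hep-th/9511111 — 5 statements merged into one kernel-verified Lean document; each statement's English description precedes it below -/
import Mathlib

section
/- Let D ≥ 2 and suppose the pair of polynomial vector fields (P, P̄) satisfies the system (S): ∂_μ P_ν = ∂_ν P̄_μ for all μ, ν, and Σ_μ ∂^μ P_μ = Σ_μ ∂^μ P̄_μ. If every component P_μ and P̄_μ is homogeneous of degree n with n > 1, then the solution is trivial: there exists a polynomial R (homogeneous of degree n+1) such that P_μ = P̄_μ = ∂_μ R for all μ. -/
open MvPolynomial

/-- The partial derivative `∂_μ` on `ℂ[x^0, …, x^{D-1}]`, as a linear map. -/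
noncomputable def pd (D : ℕ) (μ : Fin D) :
    MvPolynomial (Fin D) ℂ →ₗ[ℂ] MvPolynomial (Fin D) ℂ :=
  (pderiv μ).toLinearMap

/-- The raised-index derivative `∂^μ = η^{μμ} ∂_μ` for the Minkowski metric
`η = diag(-1, 1, …, 1)` (no sum over `μ`). -/
noncomputable def pdU (D : ℕ) (μ : Fin D) :
    MvPolynomial (Fin D) ℂ →ₗ[ℂ] MvPolynomial (Fin D) ℂ :=
  (if (μ : ℕ) = 0 then (-1 : ℂ) else 1) • pd D μ

/-!
Mixed partials commute, so `∂_l ∂_i P_j = ∂_i ∂_j P̄_l` is symmetric in `i` and `j`: all derivatives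
of the curl `∂_i P_j - ∂_j P_i` vanish. The curl is homogeneous of degree `n - 1 > 0`, hence zero.
Then `∂_l P̄_i = ∂_i P_l = ∂_l P_i`, and `P̄ = P` because both are homogeneous of degree `n > 0`.
Finally, by Euler's identity, the curl-free field `P` has the potential
`(n + 1)⁻¹ ∑ i, X i * P i`.
-/

section CurlFree

variable {R σ : Type*} [CommSemiring R] {n : ℕ}

lemma pderiv_comm (i j : σ) (f : MvPolynomial σ R) :
    pderiv i (pderiv j f) = pderiv j (pderiv i f) := by
  obtain rfl | hij := eq_or_ne i j
  · rfl
  · ext m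
    simp only [coeff_pderiv, Finsupp.add_apply, Finsupp.single_eq_of_ne hij,
      Finsupp.single_eq_of_ne hij.symm, add_zero, add_right_comm m, mul_right_comm]

lemma eq_of_forall_pderiv_eq [IsAddTorsionFree R] {f g : MvPolynomial σ R}
    (hconst : constantCoeff f = constantCoeff g) (h : ∀ i, pderiv i f = pderiv i g) : f = g := by
  ext m
  obtain rfl | hm := eq_or_ne m 0
  · exact hconst
  · obtain ⟨i, hi⟩ := Finsupp.ne_iff.mp hm
    obtain ⟨m', rfl⟩ : ∃ m', m = m' + Finsupp.single i 1 :=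
      ⟨m - Finsupp.single i 1, (Finsupp.sub_add_single_one_cancel hi).symm⟩
    have coeff_eq : coeff (m' + Finsupp.single i 1) f * (m' i + 1) =
        coeff (m' + Finsupp.single i 1) g * (m' i + 1) := by
      rw [← coeff_pderiv, ← coeff_pderiv, h]
    refine nsmul_right_injective (m' i).succ_ne_zero ?_
    simpa only [nsmul_eq_mul, Nat.cast_succ, mul_comm] using coeff_eq

lemma eq_of_forall_pderiv_eq_of_isHomogeneous [IsAddTorsionFree R] {f g : MvPolynomial σ R}
    (hn : n ≠ 0) (hf : f.IsHomogeneous n) (hg : g.IsHomogeneous n)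
    (h : ∀ i, pderiv i f = pderiv i g) : f = g := by
  have constantCoeff_eq_zero {p : MvPolynomial σ R} (hp : p.IsHomogeneous n) :
      constantCoeff p = 0 :=
    hp.coeff_eq_zero (by simpa using hn.symm)
  exact eq_of_forall_pderiv_eq
    ((constantCoeff_eq_zero hf).trans (constantCoeff_eq_zero hg).symm) h

variable {P Q : σ → MvPolynomial σ R}

lemma curl_free_of_pderiv_eq_pderiv_swap [IsAddTorsionFree R] (hn : 1 < n)
    (hP : ∀ i, (P i).IsHomogeneous n) (h : ∀ i j, pderiv i (P j) = pderiv j (Q i)) (i j : σ) :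
    pderiv i (P j) = pderiv j (P i) := by
  refine eq_of_forall_pderiv_eq_of_isHomogeneous (Nat.sub_ne_zero_of_lt hn)
    (hP j).pderiv (hP i).pderiv fun l => ?_
  calc
    pderiv l (pderiv i (P j)) = pderiv i (pderiv j (Q l)) := by rw [pderiv_comm, h]
    _ = pderiv j (pderiv i (Q l)) := pderiv_comm i j (Q l)
    _ = pderiv l (pderiv j (P i)) := by rw [← h, pderiv_comm]

section Fintype

variable [Fintype σ]

lemma isHomogeneous_sum_X_mul (hP : ∀ i, (P i).IsHomogeneous n) :
    (∑ i, X i * P i).IsHomogeneous (n + 1) :=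
  IsHomogeneous.sum _ _ _ fun i _ => add_comm 1 n ▸ (isHomogeneous_X R i).mul (hP i)

lemma pderiv_sum_X_mul_of_curl_free (hP : ∀ i, (P i).IsHomogeneous n)
    (hcurl : ∀ i j, pderiv i (P j) = pderiv j (P i)) (i : σ) :
    pderiv i (∑ j, X j * P j) = (n + 1) • P i := by
  classical
  calc
    pderiv i (∑ j, X j * P j) = ∑ j, X j * pderiv j (P i) + P i := by
      simp [Derivation.leibniz, pderiv_X, Pi.single_apply, Finset.sum_add_distrib, hcurl i]
    _ = (n + 1) • P i := by rw [(hP i).sum_X_mul_pderiv, succ_nsmul]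

end Fintype

variable [Finite σ]

lemma exists_isHomogeneous_forall_eq_pderiv_of_curl_free (hn : IsUnit ((n : R) + 1))
    (hP : ∀ i, (P i).IsHomogeneous n) (hcurl : ∀ i j, pderiv i (P j) = pderiv j (P i)) :
    ∃ f : MvPolynomial σ R, f.IsHomogeneous (n + 1) ∧ ∀ i, P i = pderiv i f := by
  cases nonempty_fintype σ
  obtain ⟨c, hc⟩ := hn.exists_left_inv
  refine ⟨c • ∑ i, X i * P i,
    (homogeneousSubmodule σ R (n + 1)).smul_mem c (isHomogeneous_sum_X_mul hP), fun i => ?_⟩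
  calc
    P i = (c * (n + 1)) • P i := by rw [hc, one_smul]
    _ = c • ((n + 1) • P i) := by rw [mul_smul, ← Nat.cast_succ, Nat.cast_smul_eq_nsmul]
    _ = pderiv i (c • ∑ j, X j * P j) := by
      rw [(pderiv i).map_smul, pderiv_sum_X_mul_of_curl_free hP hcurl]

theorem homogeneous_solutions_trivial_for_degree_gt_one_general [IsAddTorsionFree R]
    (hn : 1 < n) (hunit : IsUnit ((n : R) + 1)) (hP : ∀ i, (P i).IsHomogeneous n)
    (hQ : ∀ i, (Q i).IsHomogeneous n) (h : ∀ i j, pderiv i (P j) = pderiv j (Q i)) :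
    ∃ f : MvPolynomial σ R, f.IsHomogeneous (n + 1) ∧
      ∀ i, P i = pderiv i f ∧ Q i = pderiv i f := by
  have hcurl := curl_free_of_pderiv_eq_pderiv_swap hn hP h
  have hQP (i : σ) : Q i = P i :=
    eq_of_forall_pderiv_eq_of_isHomogeneous (Nat.ne_zero_of_lt hn) (hQ i) (hP i) fun l => by
      rw [← h, hcurl]
  obtain ⟨f, hf, hPf⟩ := exists_isHomogeneous_forall_eq_pderiv_of_curl_free hunit hP hcurl
  exact ⟨f, hf, fun i => ⟨hPf i, (hQP i).trans (hPf i)⟩⟩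

end CurlFree

/-- Lemma 1 of the paper (triviality part): for `D ≥ 2`, any solution `(P, P̄)` of the system
`∂_μ P_ν = ∂_ν P̄_μ`, `Σ_μ ∂^μ P_μ = Σ_μ ∂^μ P̄_μ` whose components are homogeneous of degree
`n > 1` is trivial: `P_μ = P̄_μ = ∂_μ R` for a homogeneous polynomial `R` of degree `n + 1`. -/
theorem homogeneous_solutions_trivial_for_degree_gt_one
    (D : ℕ) (hD : 2 ≤ D) (n : ℕ) (hn : 1 < n)
    (P Pb : Fin D → MvPolynomial (Fin D) ℂ)
    (hhomP : ∀ μ, (P μ).IsHomogeneous n)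
    (hhomPb : ∀ μ, (Pb μ).IsHomogeneous n)
    (hS1 : ∀ μ ν, pd D μ (P ν) = pd D ν (Pb μ))
    (hS2 : (∑ μ, pdU D μ (P μ)) = ∑ μ, pdU D μ (Pb μ)) :
    ∃ R : MvPolynomial (Fin D) ℂ, R.IsHomogeneous (n + 1) ∧
      ∀ μ, P μ = pd D μ R ∧ Pb μ = pd D μ R :=
  homogeneous_solutions_trivial_for_degree_gt_one_general hn
    (Nat.cast_add_one_ne_zero n).isUnit hhomP hhomPb hS1
end

section
/- Let D ≥ 2. Let S be the ℂ-vector space of all pairs (P, P̄) of polynomial vector fields satisfying the system (S): ∂_μ P_ν = ∂_ν P̄_μ for all μ, ν and Σ_μ ∂^μ P_μ = Σ_μ ∂^μ P̄_μ, and let T ⊆ S be the subspace of trivial solutions {(∇R, ∇R) : R a polynomial}, where (∇R)_μ = ∂_μ R. Then the quotient space S/T is finite dimensional of dimension D(D+1)/2, and every class in S/T has a representative (P, P̄) all of whose components are polynomials of total degree at most one. -/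
open MvPolynomial

/-- Pairs `(P, P̄)` of polynomial vector fields on `ℝ^{D-1,1}`. -/
abbrev PairVF (D : ℕ) :=
  (Fin D → MvPolynomial (Fin D) ℂ) × (Fin D → MvPolynomial (Fin D) ℂ)

/-- The space `S` of solutions `(P, P̄)` of the system (S):
`∂_μ P_ν = ∂_ν P̄_μ` for all `μ, ν`, and `Σ_μ ∂^μ P_μ = Σ_μ ∂^μ P̄_μ`. -/
noncomputable def solS (D : ℕ) : Submodule ℂ (PairVF D) where
  carrier := {p | (∀ μ ν, pd D μ (p.1 ν) = pd D ν (p.2 μ)) ∧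
    (∑ μ, pdU D μ (p.1 μ)) = ∑ μ, pdU D μ (p.2 μ)}
  add_mem' := by
    rintro a b ⟨ha1, ha2⟩ ⟨hb1, hb2⟩
    refine ⟨fun μ ν => ?_, ?_⟩
    · simp only [Prod.fst_add, Prod.snd_add, Pi.add_apply, map_add, ha1 μ ν, hb1 μ ν]
    · simp only [Prod.fst_add, Prod.snd_add, Pi.add_apply, map_add,
        Finset.sum_add_distrib, ha2, hb2]
  zero_mem' := by
    refine ⟨fun μ ν => ?_, ?_⟩ <;> simp
  smul_mem' := by
    rintro c a ⟨ha1, ha2⟩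
    refine ⟨fun μ ν => ?_, ?_⟩
    · simp only [Prod.smul_fst, Prod.smul_snd, Pi.smul_apply, map_smul, ha1 μ ν]
    · simp only [Prod.smul_fst, Prod.smul_snd, Pi.smul_apply, map_smul,
        ← Finset.smul_sum, ha2]

/-- The gradient `R ↦ (∂_μ R)_μ` as a linear map. -/
noncomputable def grad (D : ℕ) :
    MvPolynomial (Fin D) ℂ →ₗ[ℂ] (Fin D → MvPolynomial (Fin D) ℂ) :=
  LinearMap.pi fun μ => pd D μ

/-- The map `R ↦ (∇R, ∇R)`. -/
noncomputable def gradPair (D : ℕ) : MvPolynomial (Fin D) ℂ →ₗ[ℂ] PairVF D :=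
  (grad D).prod (grad D)

/-- The space `T` of trivial solutions `(∇R, ∇R)`. -/
noncomputable def trivT (D : ℕ) : Submodule ℂ (PairVF D) :=
  LinearMap.range (gradPair D)

/-!
Modulo gradient pairs, a solution is determined by first-order data at the origin. The system
gives `∂ₖ (∂ᵢ Pⱼ - ∂ⱼ Pᵢ) = ∂ᵢ ∂ⱼ P̄ₖ - ∂ⱼ ∂ᵢ P̄ₖ = 0`, so the curl of `P` is constant. If it
vanishes, then `P` is a gradient by the Poincaré lemma, and `∂ⱼ (P̄ᵢ - Pᵢ) = ∂ᵢ Pⱼ - ∂ⱼ Pᵢ = 0`, so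
`P̄ - P` is constant as well. Conversely `P = Aᵀ x`, `P̄ = A x + c` is a solution for every matrix
`A` and vector `c`, with curl `A - Aᵀ` and difference `c`. Hence `H¹` is the space of
skew-symmetric matrices plus the space of vectors.
-/

section MvPolynomialCalculus

variable {R σ : Type*}

theorem pderiv_pderiv_comm [CommRing R] (i j : σ) (p : MvPolynomial σ R) :
    pderiv i (pderiv j p) = pderiv j (pderiv i p) := by
  classical
  have h : ⁅pderiv (R := R) i, pderiv j⁆ = 0 := derivation_ext fun k => by
    rw [Derivation.commutator_apply, pderiv_X, pderiv_X, Pi.single_apply, Pi.single_apply]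
    split_ifs <;> simp
  rw [← sub_eq_zero, ← Derivation.commutator_apply, h, Derivation.zero_apply]

section CommSemiring

variable [CommSemiring R]

theorem eq_zero_of_pderiv_eq_zero [IsAddTorsionFree R] {p : MvPolynomial σ R}
    (hderiv : ∀ i, pderiv i p = 0) (hconst : constantCoeff p = 0) : p = 0 := by
  ext m
  rw [coeff_zero]
  by_cases hm : m = 0
  · rw [hm]
    exact hconst
  · obtain ⟨i, hi⟩ : ∃ i, m i ≠ 0 := DFunLike.ne_iff.mp hm
    have hcoeff := congrArg (coeff (m - Finsupp.single i 1)) (hderiv i)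
    rw [coeff_pderiv, Finsupp.sub_add_single_one_cancel hi, coeff_zero, ← Nat.cast_add_one,
      mul_comm, ← nsmul_eq_mul] at hcoeff
    exact (nsmul_eq_zero_iff_right (Nat.succ_ne_zero _)).mp hcoeff

theorem pderiv_homogeneousComponent_succ (n : ℕ) (i : σ) (p : MvPolynomial σ R) :
    pderiv i (homogeneousComponent (n + 1) p) = homogeneousComponent n (pderiv i p) := by
  ext m
  simp only [coeff_pderiv, coeff_homogeneousComponent, map_add, Finsupp.degree_single,
    Nat.add_right_cancel_iff, ite_mul, zero_mul]

theorem sum_range_homogeneousComponent {N : ℕ} {p : MvPolynomial σ R} (hN : p.totalDegree < N) :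
    ∑ n ∈ Finset.range N, homogeneousComponent n p = p := by
  conv_rhs => rw [← sum_homogeneousComponent p]
  refine (Finset.sum_subset (Finset.range_subset_range.mpr hN) fun n _ hn => ?_).symm
  exact homogeneousComponent_eq_zero n p (by simpa using hn)

theorem pderiv_toMvPolynomial [Fintype σ] (A : Matrix σ σ R) (i j : σ) :
    pderiv i (A.toMvPolynomial j) = C (A j i) := by
  classical
  simp [Matrix.toMvPolynomial, ← C_mul_X_eq_monomial, Pi.single_apply]

end CommSemiring

variable [CommRing R] [Algebra ℚ R]

theorem pderiv_smul_sum_X_mul [Fintype σ] {n : ℕ} {P : σ → MvPolynomial σ R}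
    (hhom : ∀ i, (P i).IsHomogeneous n) (hclosed : ∀ i j, pderiv i (P j) = pderiv j (P i))
    (i : σ) : pderiv i (((n : ℚ) + 1)⁻¹ • ∑ j, X j * P j) = P i := by
  classical
  have heuler : pderiv i (∑ j, X j * P j) = ((n : ℚ) + 1) • P i := calc
    pderiv i (∑ j, X j * P j) = P i + ∑ j, X j * pderiv j (P i) := by
      simp only [map_sum, pderiv_mul, pderiv_X, Pi.single_apply, ite_mul, one_mul, zero_mul,
        Finset.sum_add_distrib, Finset.sum_ite_eq', Finset.mem_univ, if_true, hclosed i]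
    _ = ((n : ℚ) + 1) • P i := by
      rw [(hhom i).sum_X_mul_pderiv, add_smul, one_smul, Nat.cast_smul_eq_nsmul, add_comm]
  rw [map_rat_smul, heuler, inv_smul_smul₀ (Nat.cast_add_one_ne_zero n)]

theorem exists_pderiv_eq_of_closed [Finite σ] {P : σ → MvPolynomial σ R}
    (hclosed : ∀ i j, pderiv i (P j) = pderiv j (P i)) :
    ∃ f : MvPolynomial σ R, ∀ i, pderiv i f = P i := by
  cases nonempty_fintype σ
  let N := (Finset.univ.sup fun i => (P i).totalDegree) + 1
  have hN (i : σ) : (P i).totalDegree < N :=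
    Nat.lt_succ_of_le (Finset.le_sup (f := fun i => (P i).totalDegree) (Finset.mem_univ i))
  have hcomponent (n : ℕ) (i j : σ) : pderiv i (homogeneousComponent n (P j)) =
      pderiv j (homogeneousComponent n (P i)) := by
    cases n with
    | zero => simp
    | succ n => rw [pderiv_homogeneousComponent_succ, pderiv_homogeneousComponent_succ, hclosed]
  refine ⟨∑ n ∈ Finset.range N, ((n : ℚ) + 1)⁻¹ • ∑ j, X j * homogeneousComponent n (P j),
    fun i => ?_⟩
  calc
    _ = ∑ n ∈ Finset.range N, homogeneousComponent n (P i) := by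
      rw [map_sum]
      exact Finset.sum_congr rfl fun n _ => pderiv_smul_sum_X_mul
        (fun j => homogeneousComponent_isHomogeneous n (P j)) (hcomponent n) i
    _ = P i := sum_range_homogeneousComponent (hN i)

end MvPolynomialCalculus

theorem card_subtype_lt_add_card (σ : Type*) [Fintype σ] [LinearOrder σ] :
    Fintype.card {ij : σ × σ // ij.1 < ij.2} + Fintype.card σ =
      Fintype.card σ * (Fintype.card σ + 1) / 2 := by
  have hdiag : Fintype.card {ij : σ × σ // ij.1 = ij.2} = Fintype.card σ :=
    Fintype.card_congr
      ⟨fun ij => ij.1.1, fun i => ⟨(i, i), rfl⟩, fun ⟨⟨i, _⟩, h⟩ => by cases h; rfl, fun _ => rfl⟩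
  have hdisjoint : Disjoint (fun ij : σ × σ => ij.1 < ij.2) (fun ij => ij.1 = ij.2) :=
    Pi.disjoint_iff.mpr fun ij => by simpa using fun h : ij.1 < ij.2 => h.ne
  rw [← hdiag, ← Fintype.card_subtype_or_disjoint _ _ hdisjoint, hdiag]
  simp only [← le_iff_lt_or_eq]
  rw [← Fintype.card_congr Sym2.sortEquiv, Sym2.card, Nat.choose_two_right,
    Nat.add_sub_cancel, mul_comm]

/-- The pairs `(P, P̄)` of polynomial vector fields in the variables `σ` over `R`. -/
abbrev VectorFieldPair (R σ : Type*) [CommSemiring R] :=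
  (σ → MvPolynomial σ R) × (σ → MvPolynomial σ R)

section CrossClosedPairs

variable (R σ : Type*) [CommRing R]

/-- The pairs `(P, P̄)` of polynomial vector fields with `∂ᵢ Pⱼ = ∂ⱼ P̄ᵢ` for all `i, j`. The
divergence equation of the system (S) is left out: it follows from the cases `i = j`. -/
def crossClosedPairs : Submodule R (VectorFieldPair R σ) where
  carrier := {p | ∀ i j, pderiv i (p.1 j) = pderiv j (p.2 i)}
  add_mem' hp hq i j := by simp [hp i j, hq i j]
  zero_mem' i j := by simp
  smul_mem' c p hp i j := by simp [hp i j]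

/-- The pairs `(∇f, ∇f)` for a polynomial `f`: the trivial solutions, over any coefficient ring
and in any set of variables. -/
noncomputable def gradientPairs : Submodule R (VectorFieldPair R σ) :=
  let gradient : MvPolynomial σ R →ₗ[R] σ → MvPolynomial σ R :=
    LinearMap.pi fun i => (pderiv i).toLinearMap
  LinearMap.range (gradient.prod gradient)

/-- The cohomology `H¹ = S/T`: cross-closed pairs modulo gradient pairs. -/
abbrev CrossClosedCohomology : Type _ :=
  crossClosedPairs R σ ⧸ (gradientPairs R σ).comap (crossClosedPairs R σ).subtype

/-- The complete invariants of a class in `H¹`: the entries above the diagonal of the curl of `P`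
at the origin, and the value of `P̄ - P` at the origin. -/
noncomputable def originInvariants [LinearOrder σ] :
    VectorFieldPair R σ →ₗ[R] ({ij : σ × σ // ij.1 < ij.2} → R) × (σ → R) where
  toFun p :=
    (fun ij => constantCoeff (pderiv ij.1.1 (p.1 ij.1.2) - pderiv ij.1.2 (p.1 ij.1.1)),
      fun i => constantCoeff (p.2 i - p.1 i))
  map_add' p q := by ext <;> simp <;> ring
  map_smul' c p := by ext <;> simp [mul_sub]

variable {R σ}

theorem constantCoeff_curl_eq_zero [LinearOrder σ] {p : VectorFieldPair R σ}
    (hp : originInvariants R σ p = 0) (i j : σ) :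
    constantCoeff (pderiv i (p.1 j) - pderiv j (p.1 i)) = 0 := by
  have hlt {i j : σ} (hij : i < j) : constantCoeff (pderiv i (p.1 j) - pderiv j (p.1 i)) = 0 :=
    congrFun (congrArg Prod.fst hp) ⟨(i, j), hij⟩
  rcases lt_trichotomy i j with hij | rfl | hji
  · exact hlt hij
  · rw [sub_self, map_zero]
  · rw [← neg_sub, map_neg, hlt hji, neg_zero]

theorem pderiv_curl_eq_zero {p : VectorFieldPair R σ} (hp : p ∈ crossClosedPairs R σ)
    (i j k : σ) :
    pderiv k (pderiv i (p.1 j) - pderiv j (p.1 i)) = 0 := by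
  rw [map_sub, sub_eq_zero]
  calc
    pderiv k (pderiv i (p.1 j)) = pderiv i (pderiv j (p.2 k)) := by
      rw [pderiv_pderiv_comm, hp k j]
    _ = pderiv j (pderiv i (p.2 k)) := pderiv_pderiv_comm i j _
    _ = pderiv k (pderiv j (p.1 i)) := by rw [← hp k i, pderiv_pderiv_comm]

theorem originInvariants_eq_zero_of_mem_gradientPairs [LinearOrder σ] {p : VectorFieldPair R σ}
    (hp : p ∈ gradientPairs R σ) : originInvariants R σ p = 0 := by
  obtain ⟨f, rfl⟩ := hp
  ext <;> simp [originInvariants, pderiv_pderiv_comm]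

section FiniteVariables

variable [Algebra ℚ R] [Finite σ] [LinearOrder σ]

theorem mem_gradientPairs_of_originInvariants_eq_zero {p : VectorFieldPair R σ}
    (hp : p ∈ crossClosedPairs R σ)
    (hinv : originInvariants R σ p = 0) : p ∈ gradientPairs R σ := by
  have : IsAddTorsionFree R := .of_module_rat R
  have hclosed (i j : σ) : pderiv i (p.1 j) = pderiv j (p.1 i) := sub_eq_zero.mp <|
    eq_zero_of_pderiv_eq_zero (pderiv_curl_eq_zero hp i j) (constantCoeff_curl_eq_zero hinv i j)
  have heq (i : σ) : p.2 i = p.1 i := by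
    refine sub_eq_zero.mp <| eq_zero_of_pderiv_eq_zero (fun j => ?_)
      (congrFun (congrArg Prod.snd hinv) i)
    rw [map_sub, ← hp i j, hclosed i j, sub_self]
  obtain ⟨f, hf⟩ := exists_pderiv_eq_of_closed hclosed
  exact ⟨f, Prod.ext (funext hf) (funext fun i => (hf i).trans (heq i).symm)⟩

theorem comap_gradientPairs_eq_ker :
    (gradientPairs R σ).comap (crossClosedPairs R σ).subtype =
      LinearMap.ker ((originInvariants R σ).comp (crossClosedPairs R σ).subtype) :=
  Submodule.ext fun p => ⟨originInvariants_eq_zero_of_mem_gradientPairs,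
    mem_gradientPairs_of_originInvariants_eq_zero p.2⟩

theorem mk_eq_mk_iff_originInvariants_eq {p q : crossClosedPairs R σ} :
    (Submodule.Quotient.mk p : CrossClosedCohomology R σ) = Submodule.Quotient.mk q ↔
      originInvariants R σ p = originInvariants R σ q := by
  rw [Submodule.Quotient.eq, comap_gradientPairs_eq_ker, LinearMap.sub_mem_ker_iff]
  rfl

end FiniteVariables

variable [Fintype σ]

/-- The pair `P = Aᵀ x`, `P̄ = A x + c` of affine vector fields. -/
noncomputable def affinePair (A : Matrix σ σ R) (c : σ → R) : VectorFieldPair R σ :=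
  (A.transpose.toMvPolynomial, fun i => A.toMvPolynomial i + C (c i))

theorem affinePair_mem_crossClosedPairs (A : Matrix σ σ R) (c : σ → R) :
    affinePair A c ∈ crossClosedPairs R σ := by
  intro i j
  simp [affinePair, pderiv_toMvPolynomial]

theorem totalDegree_affinePair_fst_le (A : Matrix σ σ R) (c : σ → R) (i : σ) :
    ((affinePair A c).1 i).totalDegree ≤ 1 :=
  Matrix.toMvPolynomial_totalDegree_le _ i

theorem totalDegree_affinePair_snd_le (A : Matrix σ σ R) (c : σ → R) (i : σ) :
    ((affinePair A c).2 i).totalDegree ≤ 1 :=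
  (totalDegree_add _ _).trans <|
    max_le (Matrix.toMvPolynomial_totalDegree_le A i) (by simp [totalDegree_C])

variable [LinearOrder σ]

theorem originInvariants_affinePair (A : Matrix σ σ R) (c : σ → R) :
    originInvariants R σ (affinePair A c) = (fun ij => A ij.1.1 ij.1.2 - A ij.1.2 ij.1.1, c) := by
  ext <;> simp [originInvariants, affinePair, pderiv_toMvPolynomial]

theorem exists_originInvariants_affinePair_eq
    (y : ({ij : σ × σ // ij.1 < ij.2} → R) × (σ → R)) :
    ∃ (A : Matrix σ σ R) (c : σ → R), originInvariants R σ (affinePair A c) = y := by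
  let A : Matrix σ σ R := fun i j => if h : i < j then y.1 ⟨(i, j), h⟩ else 0
  refine ⟨A, y.2, ?_⟩
  rw [originInvariants_affinePair]
  refine Prod.ext (funext fun ij => ?_) rfl
  simp [A, ij.2, ij.2.not_gt]

variable [Algebra ℚ R]

/-- The isomorphism induced on `H¹` by `originInvariants`. -/
noncomputable def crossClosedCohomologyEquiv :
    CrossClosedCohomology R σ ≃ₗ[R] ({ij : σ × σ // ij.1 < ij.2} → R) × (σ → R) :=
  (Submodule.quotEquivOfEq _ _ comap_gradientPairs_eq_ker).trans <|
    LinearMap.quotKerEquivOfSurjective _ fun y =>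
      let ⟨A, c, h⟩ := exists_originInvariants_affinePair_eq y
      ⟨⟨affinePair A c, affinePair_mem_crossClosedPairs A c⟩, h⟩

theorem exists_mk_affinePair_eq (x : CrossClosedCohomology R σ) :
    ∃ (A : Matrix σ σ R) (c : σ → R),
      Submodule.Quotient.mk ⟨affinePair A c, affinePair_mem_crossClosedPairs A c⟩ = x := by
  obtain ⟨p, rfl⟩ := Submodule.Quotient.mk_surjective _ x
  obtain ⟨A, c, h⟩ := exists_originInvariants_affinePair_eq (originInvariants R σ p)
  exact ⟨A, c, mk_eq_mk_iff_originInvariants_eq.mpr h⟩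

end CrossClosedPairs

theorem solS_eq_crossClosedPairs (D : ℕ) : solS D = crossClosedPairs ℂ (Fin D) :=
  Submodule.ext fun p => ⟨And.left, fun hp => ⟨hp, Finset.sum_congr rfl fun μ _ => by
    have hdiag : pd D μ (p.1 μ) = pd D μ (p.2 μ) := hp μ μ
    rw [pdU, LinearMap.smul_apply, LinearMap.smul_apply, hdiag]⟩⟩

theorem trivT_eq_gradientPairs (D : ℕ) : trivT D = gradientPairs ℂ (Fin D) := rfl

theorem h1_dim_and_low_degree_representatives_general (R σ : Type*) [CommRing R] [Nontrivial R]
    [Algebra ℚ R] [Fintype σ] :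
    Module.Finite R (CrossClosedCohomology R σ) ∧
    Module.finrank R (CrossClosedCohomology R σ) = Fintype.card σ * (Fintype.card σ + 1) / 2 ∧
    ∀ x : CrossClosedCohomology R σ, ∃ p : crossClosedPairs R σ,
      Submodule.Quotient.mk p = x ∧
      (∀ i, (p.1.1 i).totalDegree ≤ 1) ∧ (∀ i, (p.1.2 i).totalDegree ≤ 1) := by
  let : LinearOrder σ := IsWellOrder.linearOrder WellOrderingRel
  refine ⟨.equiv crossClosedCohomologyEquiv.symm, ?_, fun x => ?_⟩
  · rw [crossClosedCohomologyEquiv.finrank_eq, Module.finrank_prod,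
      Module.finrank_fintype_fun_eq_card, Module.finrank_fintype_fun_eq_card,
      card_subtype_lt_add_card]
  · obtain ⟨A, c, hx⟩ := exists_mk_affinePair_eq x
    exact ⟨_, hx, totalDegree_affinePair_fst_le A c, totalDegree_affinePair_snd_le A c⟩

/-- Lemma 1 of the paper: for `D ≥ 2` the quotient `H¹ = S/T` of the space of solutions of the
system (S) by the trivial solutions is finite dimensional of dimension `D(D+1)/2`, and every
cohomology class has a representative of total degree at most one. -/
theorem h1_dim_and_low_degree_representatives (D : ℕ) (hD : 2 ≤ D) :
    Module.Finite ℂ (solS D ⧸ (trivT D).comap (solS D).subtype) ∧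
    Module.finrank ℂ (solS D ⧸ (trivT D).comap (solS D).subtype) = D * (D + 1) / 2 ∧
    ∀ x : solS D ⧸ (trivT D).comap (solS D).subtype, ∃ p : solS D,
      Submodule.Quotient.mk p = x ∧
      (∀ μ, ((p : PairVF D).1 μ).totalDegree ≤ 1) ∧
      (∀ μ, ((p : PairVF D).2 μ).totalDegree ≤ 1) := by
  rw [solS_eq_crossClosedPairs, trivT_eq_gradientPairs]
  simpa using h1_dim_and_low_degree_representatives_general ℂ (Fin D)
end

section
/- Let D ≥ 2. Suppose P and P̄ are polynomial vector fields with Σ_μ ∂^μ P_μ = Σ_μ ∂^μ P̄_μ. Then there exist a D×D matrix of polynomials Q = (Q_{μν}) and a polynomial R such that for every μ: P_μ = Σ_ν ∂^ν Q_{μν} + ∂_μ R and P̄_μ = Σ_ν ∂^ν Q_{νμ} + ∂_μ R. (Vanishing of the ghost-number-four cohomology H⁴ of the polynomial complex computing the zero-momentum semi-relative cohomology of the extended closed-string complex.) -/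
open MvPolynomial

/-!
Absorbing the constants `η^{μμ}` into `P` and `Q` reduces the claim to the flat divergence
`div P = ∑ μ, ∂_μ P_μ`. If `P` and `P̄` have equal divergence then `(P - P̄) / 2` is
divergence-free, so by the Poincaré lemma it is the divergence of an antisymmetric matrix `W`,
while `(P + P̄) / 2` is the divergence of a diagonal matrix `S` because each `∂_μ` is surjective.
Then `Q = S + W` and `R = 0` work.

For the Poincaré lemma let `E = ∑ ν, x_ν ∂_ν` and let `n` be the number of variables. The matrix
`W_{μν} = B_μ x_ν - x_μ B_ν` satisfies `∑ ν, ∂_ν W_{μν} = (E + n - 1) B_μ - x_μ div B`.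
Since `E` multiplies a monomial by its degree, `E + n - 1` is invertible for `2 ≤ n`; solve
`(E + n - 1) B_μ = A_μ`. As `div ((E + n - 1) B) = (E + n) (div B)`, a divergence-free `A` forces
`div B = 0`, and then `W` has divergence `A`.
-/

section EulerDerivation

variable {σ R : Type*} [CommSemiring R]

variable (σ R) in
/-- The Euler operator `∑ i, xᵢ ∂ᵢ`, the generator of dilations. It is encoded as the derivation
fixing every variable, which makes sense for infinite `σ` as well. -/
noncomputable def eulerDerivation : Derivation R (MvPolynomial σ R) (MvPolynomial σ R) :=
  mkDerivation R X

theorem eulerDerivation_monomial (m : σ →₀ ℕ) (a : R) :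
    eulerDerivation σ R (monomial m a) = m.degree • monomial m a := by
  have summand (i : σ) (hi : i ∈ m.support) :
      a • (monomial (m - Finsupp.single i 1) (m i : R) • X i) = m i • monomial m a := by
    rw [smul_eq_mul, X, monomial_mul, mul_one, smul_monomial, smul_monomial,
      Finsupp.sub_add_single_one_cancel (Finsupp.mem_support_iff.mp hi), smul_eq_mul,
      nsmul_eq_mul, mul_comm]
  rw [eulerDerivation, mkDerivation_monomial, Finsupp.sum, Finset.smul_sum,
    Finset.sum_congr rfl summand, ← Finset.sum_smul, Finsupp.degree_apply]

theorem eulerDerivation_eq_sum_X_mul_pderiv [Fintype σ] (p : MvPolynomial σ R) :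
    eulerDerivation σ R p = ∑ i, X i * pderiv i p := by
  induction p using MvPolynomial.induction_on' with
  | monomial m a =>
    simp only [eulerDerivation_monomial, X_mul_pderiv_monomial, ← Finset.sum_smul,
      Finsupp.degree_eq_sum]
  | add p q hp hq => simp only [map_add, mul_add, Finset.sum_add_distrib, hp, hq]

theorem coeff_eulerDerivation (m : σ →₀ ℕ) (p : MvPolynomial σ R) :
    coeff m (eulerDerivation σ R p) = m.degree • coeff m p := by
  classical
  induction p using MvPolynomial.induction_on' with
  | monomial k a =>
    rw [eulerDerivation_monomial, coeff_smul, coeff_monomial]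
    split_ifs with h
    · rw [h]
    · simp only [smul_zero]
  | add p q hp hq => rw [map_add, coeff_add, coeff_add, hp, hq, smul_add]

theorem pderiv_eulerDerivation (i : σ) (p : MvPolynomial σ R) :
    pderiv i (eulerDerivation σ R p) = eulerDerivation σ R (pderiv i p) + pderiv i p := by
  ext m
  rw [coeff_add, coeff_eulerDerivation, coeff_pderiv, coeff_pderiv, coeff_eulerDerivation,
    map_add, Finsupp.degree_single, add_smul, one_smul, add_mul, smul_mul_assoc]

theorem eq_zero_of_eulerDerivation_add_nsmul_eq_zero [IsAddTorsionFree R] {c : ℕ} (hc : c ≠ 0)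
    {p : MvPolynomial σ R} (h : eulerDerivation σ R p + c • p = 0) : p = 0 := by
  ext m
  have hm : (m.degree + c) • coeff m p = 0 := by
    rw [add_smul, ← coeff_eulerDerivation, ← coeff_smul, ← coeff_add, h, coeff_zero]
  rw [coeff_zero]
  exact (nsmul_eq_zero_iff_right (by omega)).mp hm

end EulerDerivation

section Surjectivity

variable {σ R : Type*} [CommRing R] [Algebra ℚ R]

theorem exists_eulerDerivation_add_nsmul_eq {c : ℕ} (hc : c ≠ 0) (p : MvPolynomial σ R) :
    ∃ q, eulerDerivation σ R q + c • q = p := by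
  induction p using MvPolynomial.induction_on' with
  | monomial m a =>
    have hne : ((m.degree + c : ℕ) : ℚ) ≠ 0 := Nat.cast_ne_zero.mpr (by omega)
    refine ⟨monomial m (((m.degree + c : ℕ) : ℚ)⁻¹ • a), ?_⟩
    rw [eulerDerivation_monomial, ← add_smul, smul_monomial, ← Nat.cast_smul_eq_nsmul ℚ,
      smul_inv_smul₀ hne]
  | add p q hp hq =>
    obtain ⟨u, rfl⟩ := hp
    obtain ⟨v, rfl⟩ := hq
    exact ⟨u + v, by rw [map_add, smul_add, add_add_add_comm]⟩

theorem pderiv_surjective (i : σ) :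
    Function.Surjective (pderiv i : MvPolynomial σ R → MvPolynomial σ R) := by
  intro p
  induction p using MvPolynomial.induction_on' with
  | monomial m a =>
    have hne : ((m i + 1 : ℕ) : ℚ) ≠ 0 := Nat.cast_ne_zero.mpr (Nat.succ_ne_zero _)
    refine ⟨monomial (m + Finsupp.single i 1) (((m i + 1 : ℕ) : ℚ)⁻¹ • a), ?_⟩
    rw [pderiv_monomial, add_tsub_cancel_right, Finsupp.add_apply, Finsupp.single_eq_same,
      mul_comm, ← nsmul_eq_mul, ← Nat.cast_smul_eq_nsmul ℚ, smul_inv_smul₀ hne]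
  | add p q hp hq =>
    obtain ⟨u, rfl⟩ := hp
    obtain ⟨v, rfl⟩ := hq
    exact ⟨u + v, map_add _ u v⟩

end Surjectivity

section Divergence

variable {σ R : Type*} [Fintype σ] [CommSemiring R]

variable (σ R) in
/-- The divergence `∑ i, ∂ᵢ Aᵢ` of a polynomial vector field with respect to the flat metric,
so without the signs of the Minkowski metric. -/
noncomputable def divergence : (σ → MvPolynomial σ R) →ₗ[R] MvPolynomial σ R :=
  ∑ i, (pderiv i).toLinearMap ∘ₗ LinearMap.proj i

theorem divergence_apply (A : σ → MvPolynomial σ R) :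
    divergence σ R A = ∑ i, pderiv i (A i) := by
  simp [divergence]

theorem divergence_eulerDerivation_add_nsmul (c : ℕ) (B : σ → MvPolynomial σ R) :
    divergence σ R (fun i => eulerDerivation σ R (B i) + c • B i) =
      eulerDerivation σ R (divergence σ R B) + (c + 1) • divergence σ R B := by
  simp only [divergence_apply, map_add, map_nsmul, pderiv_eulerDerivation, map_sum,
    Finset.sum_add_distrib, ← Finset.smul_sum]
  module

variable (σ R) in
/-- The divergence of a polynomial 2-tensor in its second index: the vector field whose `i`-th
component is the divergence of the `i`-th row of the matrix. -/
noncomputable def rowDivergence :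
    Matrix σ σ (MvPolynomial σ R) →ₗ[R] σ → MvPolynomial σ R :=
  (divergence σ R).compLeft σ

theorem rowDivergence_apply (Q : Matrix σ σ (MvPolynomial σ R)) (i : σ) :
    rowDivergence σ R Q i = ∑ j, pderiv j (Q i j) :=
  divergence_apply (Q i)

theorem rowDivergence_diagonal [DecidableEq σ] (A : σ → MvPolynomial σ R) :
    rowDivergence σ R (Matrix.diagonal A) = fun i => pderiv i (A i) := by
  ext1 i
  have off_diagonal (j : σ) (hj : j ≠ i) : pderiv j (Matrix.diagonal A i j) = 0 := by
    rw [Matrix.diagonal_apply_ne' A hj, map_zero]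
  rw [rowDivergence_apply, Fintype.sum_eq_single i off_diagonal, Matrix.diagonal_apply_eq]

theorem sum_smul_pderiv_mul_smul_eq_smul_rowDivergence {η θ : σ → R}
    (hηθ : ∀ i, η i * θ i = 1) (Q : Matrix σ σ (MvPolynomial σ R)) (i : σ) :
    ∑ j, η j • pderiv j ((θ i * θ j) • Q i j) = θ i • rowDivergence σ R Q i := by
  rw [rowDivergence_apply, Finset.smul_sum]
  refine Finset.sum_congr rfl fun j _ => ?_
  rw [Derivation.map_smul, smul_smul, mul_left_comm, hηθ, mul_one]

end Divergence

section RadialWedge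

variable {σ R : Type*} [CommRing R]

/-- The antisymmetric tensor `B ∧ x = B xᵀ - x Bᵀ` formed from `B` and the radial vector field `x`;
up to normalisation, `B ↦ B ∧ x` is the contracting homotopy of the Poincaré lemma. -/
noncomputable def radialWedge (B : σ → MvPolynomial σ R) : Matrix σ σ (MvPolynomial σ R) :=
  Matrix.vecMulVec B X - Matrix.vecMulVec X B

theorem transpose_radialWedge (B : σ → MvPolynomial σ R) :
    (radialWedge B).transpose = -radialWedge B := by
  rw [radialWedge, Matrix.transpose_sub, Matrix.transpose_vecMulVec, Matrix.transpose_vecMulVec,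
    neg_sub]

theorem rowDivergence_radialWedge [Fintype σ] (B : σ → MvPolynomial σ R) (i : σ) :
    rowDivergence σ R (radialWedge B) i =
      eulerDerivation σ R (B i) + (Fintype.card σ - 1) • B i - X i * divergence σ R B := by
  classical
  have summand (j : σ) : pderiv j (radialWedge B i j) =
      X j * pderiv j (B i) + B i - (if j = i then B i else 0) - X i * pderiv j (B j) := by
    obtain rfl | h := eq_or_ne j i
    · simp [radialWedge, Matrix.vecMulVec_apply, mul_comm]
    · simp [radialWedge, Matrix.vecMulVec_apply, pderiv_X_of_ne h.symm, h, add_comm]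
  have card_pos : 0 < Fintype.card σ := Fintype.card_pos_iff.mpr ⟨i⟩
  simp only [rowDivergence_apply, summand, Finset.sum_sub_distrib, Finset.sum_add_distrib,
    ← Finset.mul_sum, ← eulerDerivation_eq_sum_X_mul_pderiv, ← divergence_apply,
    Finset.sum_ite_eq', Finset.mem_univ, if_true, Finset.sum_const, Finset.card_univ,
    sub_nsmul _ card_pos]
  abel

end RadialWedge

section Potential

open scoped Matrix

variable {σ R : Type*} [Fintype σ] [CommRing R] [Algebra ℚ R]

theorem exists_skew_rowDivergence_eq_of_divergence_eq_zero [Nontrivial σ]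
    {A : σ → MvPolynomial σ R} (hA : divergence σ R A = 0) :
    ∃ W : Matrix σ σ (MvPolynomial σ R), Wᵀ = -W ∧ rowDivergence σ R W = A := by
  have := IsAddTorsionFree.of_module_rat R
  have hc : Fintype.card σ - 1 ≠ 0 := Nat.sub_ne_zero_of_lt Fintype.one_lt_card
  choose B hB using fun i => exists_eulerDerivation_add_nsmul_eq hc (A i)
  have hdiv : divergence σ R B = 0 := by
    refine eq_zero_of_eulerDerivation_add_nsmul_eq_zero
      (Nat.succ_ne_zero (Fintype.card σ - 1)) ?_
    rw [← divergence_eulerDerivation_add_nsmul, funext hB, hA]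
  refine ⟨radialWedge B, transpose_radialWedge B, funext fun i => ?_⟩
  rw [rowDivergence_radialWedge, hdiv, mul_zero, sub_zero, hB]

theorem exists_isSymm_rowDivergence_eq (A : σ → MvPolynomial σ R) :
    ∃ S : Matrix σ σ (MvPolynomial σ R), S.IsSymm ∧ rowDivergence σ R S = A := by
  classical
  choose s hs using fun i => pderiv_surjective i (A i)
  exact ⟨Matrix.diagonal s, Matrix.isSymm_diagonal s, by rw [rowDivergence_diagonal, funext hs]⟩

theorem exists_rowDivergence_eq_and_rowDivergence_transpose_eq [Nontrivial σ]
    {P P' : σ → MvPolynomial σ R} (h : divergence σ R P = divergence σ R P') :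
    ∃ Q : Matrix σ σ (MvPolynomial σ R), rowDivergence σ R Q = P ∧ rowDivergence σ R Qᵀ = P' := by
  have hdiff : divergence σ R ((1 / 2 : ℚ) • (P - P')) = 0 := by
    rw [map_rat_smul, map_sub, h, sub_self, smul_zero]
  obtain ⟨W, hW_skew, hW⟩ := exists_skew_rowDivergence_eq_of_divergence_eq_zero hdiff
  obtain ⟨S, hS_symm, hS⟩ := exists_isSymm_rowDivergence_eq ((1 / 2 : ℚ) • (P + P'))
  refine ⟨S + W, ?_, ?_⟩
  · rw [map_add, hS, hW]
    module
  · rw [Matrix.transpose_add, hS_symm, hW_skew, map_add, map_neg, hS, hW]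
    module

theorem ghost_number_four_cohomology_vanishes_general [Nontrivial σ] {η : σ → R}
    (hη : ∀ μ, IsUnit (η μ)) (P P' : σ → MvPolynomial σ R)
    (h : ∑ μ, η μ • pderiv μ (P μ) = ∑ μ, η μ • pderiv μ (P' μ)) :
    ∃ Q : σ → σ → MvPolynomial σ R,
      (∀ μ, P μ = ∑ ν, η ν • pderiv ν (Q μ ν)) ∧ ∀ μ, P' μ = ∑ ν, η ν • pderiv ν (Q ν μ) := by
  choose θ hηθ using fun μ => (hη μ).exists_right_inv
  have hdiv : divergence σ R (fun μ => η μ • P μ) = divergence σ R (fun μ => η μ • P' μ) := by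
    simpa only [divergence_apply, Derivation.map_smul] using h
  obtain ⟨Q, hQ, hQt⟩ := exists_rowDivergence_eq_and_rowDivergence_transpose_eq hdiv
  have cancel (μ : σ) (p : MvPolynomial σ R) : θ μ • η μ • p = p := by
    rw [smul_smul, mul_comm, hηθ, one_smul]
  refine ⟨fun μ ν => (θ μ * θ ν) • Q μ ν, fun μ => ?_, fun μ => ?_⟩
  · rw [sum_smul_pderiv_mul_smul_eq_smul_rowDivergence hηθ, hQ, cancel]
  · simp only [mul_comm _ (θ μ), ← Matrix.transpose_apply Q μ]
    rw [sum_smul_pderiv_mul_smul_eq_smul_rowDivergence hηθ, hQt, cancel]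

end Potential

/-- Lemma 3 of the paper (`H⁴ = 0`): any pair of polynomial vector fields `(P, P̄)` with
`Σ_μ ∂^μ P_μ = Σ_μ ∂^μ P̄_μ` is of the form
`P_μ = Σ_ν ∂^ν Q_{μν} + ∂_μ R`, `P̄_μ = Σ_ν ∂^ν Q_{νμ} + ∂_μ R`
for some matrix of polynomials `Q` and polynomial `R`. -/
theorem ghost_number_four_cohomology_vanishes (D : ℕ) (hD : 2 ≤ D)
    (P Pb : Fin D → MvPolynomial (Fin D) ℂ)
    (h : (∑ μ, pdU D μ (P μ)) = ∑ μ, pdU D μ (Pb μ)) :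
    ∃ (Q : Fin D → Fin D → MvPolynomial (Fin D) ℂ) (R : MvPolynomial (Fin D) ℂ),
      (∀ μ, P μ = (∑ ν, pdU D ν (Q μ ν)) + pd D μ R) ∧
      (∀ μ, Pb μ = (∑ ν, pdU D ν (Q ν μ)) + pd D μ R) := by
  have : Nontrivial (Fin D) := Fin.nontrivial_iff_two_le.mpr hD
  obtain ⟨Q, hP, hPb⟩ := ghost_number_four_cohomology_vanishes_general
    (η := fun μ : Fin D => if (μ : ℕ) = 0 then -1 else 1) (fun μ => by split_ifs <;> simp) P Pb h
  exact ⟨Q, 0, by simp only [map_zero, add_zero]; exact ⟨hP, hPb⟩⟩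
end

section
/- Let D ≥ 2 and let p ∈ ℝ^D (regarded as a vector of complex scalars) be nonzero and null, i.e. Σ_μ p^μ p_μ = 0 where p^μ := η^{μμ} p_μ. Then the directional-derivative map P ↦ (Σ_ν p^ν ∂_ν P_μ)_μ is surjective from the space of transverse polynomial vector fields onto itself: for every polynomial vector field Q with Σ_μ p^μ Q_μ = 0 there exists a polynomial vector field P with Σ_μ p^μ P_μ = 0 and Σ_ν p^ν ∂_ν P_μ = Q_μ for every μ. (Surjectivity of the first differential d₁ : P_μ ↦ −i p^ν ∂_ν P_μ in the massless (p² = 0, p ≠ 0) spectral sequence, which forces the ghost-number-two cohomology of the massless chiral extended complex to vanish.) -/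
open MvPolynomial

/-- The raised-index component `p^μ = η^{μμ} p_μ` of a vector `p ∈ ℝ^D` for the Minkowski
metric `η = diag(-1, 1, …, 1)` (no sum over `μ`). -/
def pUp {D : ℕ} (p : Fin D → ℝ) (μ : Fin D) : ℝ :=
  (if (μ : ℕ) = 0 then (-1 : ℝ) else 1) * p μ

/-!
The differential `d₁` is, up to the factor `-i`, the derivation `D = Σ_ν p^ν ∂_ν` applied to each
component. It is locally nilpotent, since it kills every coordinate in two steps. As `p ≠ 0`, some
linear form `s` has `D s = 1`, so integrating by parts along `s` inverts `D`:
`f = D (Σ_k (-1)^k s^(k+1) / (k+1)! * D^k f)`, a finite sum. The range of `D` being free, a linear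
section of `D` exists, and applied to each component it preserves transversality, a linear
relation with scalar coefficients.
-/

section Nilpotency

variable {R A : Type*} [CommSemiring R] [CommSemiring A] [Algebra R A]

lemma derivation_iterate_mul_eq_zero (D : Derivation R A A) {m n : ℕ} {f g : A}
    (hf : D^[m] f = 0) (hg : D^[n] g = 0) : D^[m + n] (f * g) = 0 := by
  induction m generalizing n f g with
  | zero => rw [show f = 0 from hf, zero_mul, iterate_map_zero]
  | succ m ihm =>
    induction n generalizing g with
    | zero => rw [show g = 0 from hg, mul_zero, iterate_map_zero]
    | succ n ihn =>
      have hf_Dg : D^[m + 1 + n] (f * D g) = 0 := ihn hg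
      have hg_Df : D^[m + 1 + n] (g * D f) = 0 := by
        rw [mul_comm, add_right_comm]
        exact ihm hf hg
      rw [← add_assoc, Function.iterate_succ_apply, D.leibniz, iterate_map_add, smul_eq_mul,
        smul_eq_mul, hf_Dg, hg_Df, add_zero]

/-- The subalgebra `Nil D` of elements killed by some iterate of a derivation `D`. Local nilpotency
of `D` is expressed as `nilSubalgebra D = ⊤`. -/
def nilSubalgebra (D : Derivation R A A) : Subalgebra R A where
  carrier := {f | ∃ n, D^[n] f = 0}
  mul_mem' := fun ⟨m, hm⟩ ⟨n, hn⟩ => ⟨m + n, derivation_iterate_mul_eq_zero D hm hn⟩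
  add_mem' := fun {f g} ⟨m, hm⟩ ⟨n, hn⟩ => ⟨m + n, by
    rw [iterate_map_add, Function.iterate_add_apply D m n g, hn, add_comm m n,
      Function.iterate_add_apply D n m f, hm, iterate_map_zero, iterate_map_zero, add_zero]⟩
  algebraMap_mem' r := ⟨1, D.map_algebraMap r⟩

end Nilpotency

section Slice

variable {R A : Type*} [CommSemiring R] [CommRing A] [Algebra R A] [Algebra ℚ A]
  {D : Derivation R A A} {s : A}

open Nat in
lemma derivation_integration_by_parts (hs : D s = 1) (f : A) (k : ℕ) :
    D (((-1) ^ k / (k + 1)! : ℚ) • (s ^ (k + 1) * D^[k] f)) =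
      ((-1) ^ k / k ! : ℚ) • (s ^ k * D^[k] f) -
        ((-1) ^ (k + 1) / (k + 1)! : ℚ) • (s ^ (k + 1) * D^[k + 1] f) := by
  have coeff : ((-1) ^ k / (k + 1)! : ℚ) * ((k + 1 : ℕ) : ℚ) = (-1) ^ k / k ! := by
    rw [factorial_succ, cast_mul]
    field_simp
  have leibniz : D (s ^ (k + 1) * D^[k] f) =
      ((k + 1 : ℕ) : ℚ) • (s ^ k * D^[k] f) + s ^ (k + 1) * D^[k + 1] f := by
    rw [D.leibniz, D.leibniz_pow, hs, Function.iterate_succ_apply', Nat.cast_smul_eq_nsmul]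
    simp only [smul_eq_mul, nsmul_eq_mul, add_tsub_cancel_right]
    ring
  rw [map_rat_smul, leibniz, smul_add, smul_smul, coeff, pow_succ (-1 : ℚ), mul_neg_one, neg_div,
    neg_smul, sub_neg_eq_add]

open Nat in
theorem derivation_surjective_of_slice (hs : D s = 1) (hD : nilSubalgebra D = ⊤) :
    Function.Surjective D := by
  intro f
  obtain ⟨n, hn⟩ : f ∈ nilSubalgebra D := hD ▸ Algebra.mem_top
  refine ⟨∑ k ∈ Finset.range n, ((-1) ^ k / (k + 1)! : ℚ) • (s ^ (k + 1) * D^[k] f), ?_⟩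
  rw [map_sum, Finset.sum_congr rfl fun k _ => derivation_integration_by_parts hs f k,
    Finset.sum_range_sub' (fun k => ((-1) ^ k / k ! : ℚ) • (s ^ k * D^[k] f)), hn]
  simp

end Slice

section DirectionalDerivation

variable {σ R : Type*}

/-- The derivation `Σ_i c_i ∂_i` of the polynomial ring along a constant vector `c`, specified by
its values on the variables so that there may be infinitely many of them. -/
noncomputable def directionalDerivation [CommSemiring R] (c : σ → R) :
    Derivation R (MvPolynomial σ R) (MvPolynomial σ R) :=
  mkDerivation R fun i => C (c i)

lemma directionalDerivation_X [CommSemiring R] (c : σ → R) (i : σ) :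
    directionalDerivation c (X i) = C (c i) :=
  mkDerivation_X R _ i

lemma directionalDerivation_apply [Fintype σ] [CommSemiring R] (c : σ → R)
    (f : MvPolynomial σ R) :
    directionalDerivation c f = ∑ i, c i • pderiv i f := by
  classical
  have sum_apply (g : MvPolynomial σ R) : (∑ i, c i • pderiv i : Derivation R _ _) g =
      ∑ i, c i • pderiv i g := by
    rw [← Derivation.coeFnAddMonoidHom_apply, map_sum, Finset.sum_apply]
    rfl
  rw [← sum_apply]
  refine Derivation.congr_fun (derivation_ext fun j => ?_) f
  simp [directionalDerivation_X, sum_apply, pderiv_X, Pi.single_apply, smul_eq_C_mul]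

lemma nilSubalgebra_directionalDerivation [CommSemiring R] (c : σ → R) :
    nilSubalgebra (directionalDerivation c) = ⊤ := by
  rw [eq_top_iff, ← adjoin_range_X, Algebra.adjoin_le_iff]
  rintro _ ⟨i, rfl⟩
  exact ⟨2, by simp [directionalDerivation_X]⟩

lemma exists_directionalDerivation_eq_one [CommSemiring R] {c : σ → R}
    (hc : Ideal.span (Set.range c) = ⊤) : ∃ s, directionalDerivation c s = 1 := by
  let constants : Ideal R :=
    (LinearMap.range (directionalDerivation c).toLinearMap).comap (Algebra.linearMap R _)
  have span_le : Ideal.span (Set.range c) ≤ constants :=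
    Ideal.span_le.2 <| Set.range_subset_iff.2 fun i => ⟨X i, directionalDerivation_X c i⟩
  obtain ⟨s, hs⟩ : (1 : R) ∈ constants := span_le (hc ▸ Submodule.mem_top)
  exact ⟨s, hs.trans (map_one C)⟩

theorem directionalDerivation_surjective [CommRing R] [Algebra ℚ R] {c : σ → R}
    (hc : Ideal.span (Set.range c) = ⊤) : Function.Surjective (directionalDerivation c) :=
  let ⟨_, hs⟩ := exists_directionalDerivation_eq_one hc
  derivation_surjective_of_slice hs (nilSubalgebra_directionalDerivation c)

end DirectionalDerivation

lemma exists_preimage_sum_smul_eq_zero {R M N ι : Type*} [Semiring R] [AddCommMonoid M]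
    [AddCommMonoid N] [Module R M] [Module R N] [Module.Projective R N] [Fintype ι]
    {f : M →ₗ[R] N} (hf : Function.Surjective f) {a : ι → R} {y : ι → N}
    (hy : ∑ i, a i • y i = 0) : ∃ x : ι → M, ∑ i, a i • x i = 0 ∧ ∀ i, f (x i) = y i := by
  obtain ⟨g, hg⟩ := Module.projective_lifting_property f LinearMap.id hf
  refine ⟨fun i => g (y i), ?_, fun i => LinearMap.congr_fun hg (y i)⟩
  simp only [← map_smul, ← map_sum, hy, map_zero]

theorem massless_d1_surjective_on_transverse_fields_general {σ ι R : Type*} [Fintype σ] [Fintype ι]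
    [CommRing R] [Algebra ℚ R] {c : σ → R} (hc : Ideal.span (Set.range c) = ⊤) {a : ι → R}
    {Q : ι → MvPolynomial σ R} (hQ : ∑ μ, a μ • Q μ = 0) :
    ∃ P : ι → MvPolynomial σ R,
      ∑ μ, a μ • P μ = 0 ∧ ∀ μ, ∑ ν, c ν • pderiv ν (P μ) = Q μ := by
  simp only [← directionalDerivation_apply]
  exact exists_preimage_sum_smul_eq_zero (f := (directionalDerivation c).toLinearMap)
    (directionalDerivation_surjective hc) hQ

lemma span_range_pUp_eq_top {D : ℕ} {p : Fin D → ℝ} (hp : p ≠ 0) :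
    Ideal.span (Set.range fun μ => ((pUp p μ : ℝ) : ℂ)) = ⊤ := by
  obtain ⟨k, hk⟩ := Function.ne_iff.mp hp
  have sign_ne_zero : (if (k : ℕ) = 0 then (-1 : ℝ) else 1) ≠ 0 := by split_ifs <;> norm_num
  have pUp_ne_zero : ((pUp p k : ℝ) : ℂ) ≠ 0 :=
    Complex.ofReal_ne_zero.2 (mul_ne_zero sign_ne_zero hk)
  exact Ideal.eq_top_of_isUnit_mem _ (Ideal.subset_span ⟨k, rfl⟩) pUp_ne_zero.isUnit

/-- Surjectivity of the first differential `d₁ : P_μ ↦ −i p^ν ∂_ν P_μ` of the massless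
(`p² = 0`, `p ≠ 0`) spectral sequence on transverse polynomial vector fields: for every
transverse polynomial vector field `Q` (`Σ_μ p^μ Q_μ = 0`) there is a transverse polynomial
vector field `P` with `Σ_ν p^ν ∂_ν P_μ = Q_μ` for all `μ`. -/
theorem massless_d1_surjective_on_transverse_fields (D : ℕ) (hD : 2 ≤ D)
    (p : Fin D → ℝ) (hp : p ≠ 0)
    (hnull : (∑ μ, pUp p μ * p μ) = 0)
    (Q : Fin D → MvPolynomial (Fin D) ℂ)
    (hQ : (∑ μ, ((pUp p μ : ℝ) : ℂ) • Q μ) = 0) :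
    ∃ P : Fin D → MvPolynomial (Fin D) ℂ,
      (∑ μ, ((pUp p μ : ℝ) : ℂ) • P μ) = 0 ∧
      ∀ μ, (∑ ν, ((pUp p ν : ℝ) : ℂ) • pd D ν (P μ)) = Q μ :=
  massless_d1_surjective_on_transverse_fields_general (span_range_pUp_eq_top hp) hQ
end

section
/- Let D ≥ 2. For n ≥ 0 let W_n be the space of homogeneous degree-n polynomial vector fields P satisfying □P_μ − ∂_μ(Σ_ν ∂^ν P_ν) = 0 for all μ (i.e. δdP = 0), and let G_n = {(∂_μ R)_μ : R a homogeneous polynomial of degree n+1} be the gradients. Then G_n ⊆ W_n and the quotient W_n/G_n has dimension D·C(D−1+n, D−1) + C(D−4+n, D−1) − C(D+n, D−1) − D·C(D−3+n, D−1), where C(a,b) is the binomial coefficient (equal to 0 when a < b); in particular the dimension is 0 for n = 0, D(D−1)/2 for n = 1, and D(D−2)(D+2)/3 for n = 2. (These are the graded dimensions Gr_{−n}H¹ of the ghost-number-one cohomology of the zero-momentum chiral extended complex, via the identification E₃^{(1)} = ker(δd, Ω¹)/dΩ⁰.) -/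
open MvPolynomial

/-- The d'Alembertian `□ = Σ_μ ∂^μ ∂_μ`. -/
noncomputable def boxOp (D : ℕ) :
    MvPolynomial (Fin D) ℂ →ₗ[ℂ] MvPolynomial (Fin D) ℂ :=
  ∑ μ : Fin D, (pdU D μ) ∘ₗ (pd D μ)

/-- The divergence `δ : P ↦ Σ_ν ∂^ν P_ν` on polynomial vector fields. -/
noncomputable def divOp (D : ℕ) :
    (Fin D → MvPolynomial (Fin D) ℂ) →ₗ[ℂ] MvPolynomial (Fin D) ℂ :=
  ∑ ν : Fin D, (pdU D ν) ∘ₗ LinearMap.proj ν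

/-- The operator `δd : P ↦ (□P_μ − ∂_μ(Σ_ν ∂^ν P_ν))_μ` on polynomial vector fields. -/
noncomputable def deltaDOp (D : ℕ) :
    (Fin D → MvPolynomial (Fin D) ℂ) →ₗ[ℂ] (Fin D → MvPolynomial (Fin D) ℂ) :=
  LinearMap.pi fun μ => boxOp D ∘ₗ LinearMap.proj μ - pd D μ ∘ₗ divOp D

/-- `W_n`: homogeneous degree-`n` polynomial vector fields `P` with `δdP = 0`. -/
noncomputable def Wn (D n : ℕ) : Submodule ℂ (Fin D → MvPolynomial (Fin D) ℂ) :=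
  LinearMap.ker (deltaDOp D) ⊓
    Submodule.pi Set.univ fun _ : Fin D => homogeneousSubmodule (Fin D) ℂ n

/-- `G_n`: gradients of homogeneous polynomials of degree `n+1`. -/
noncomputable def Gn (D n : ℕ) : Submodule ℂ (Fin D → MvPolynomial (Fin D) ℂ) :=
  (homogeneousSubmodule (Fin D) ℂ (n + 1)).map (grad D)

/-- The combinatorial binomial coefficient `C(a, b)` for an integer top argument, equal to `0`
whenever `a < b` (in particular for negative `a`). -/
def chooseZ (a : ℤ) (b : ℕ) : ℤ :=
  if 0 ≤ a then (a.toNat.choose b : ℤ) else 0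

/-!
Write `H_n` for the homogeneous polynomials of degree `n` and `V_n` for the homogeneous vector
fields of degree `n`. The dimension of `W_n / G_n` is the Euler characteristic of the complex
`0 → H_{n+1} → V_n → V_{n-2} → H_{n-3} → 0` with maps `d`, `δd`, `δ`, which is exact except at
`V_n`, where its cohomology is `W_n / G_n`.

Exactness at `V_{n-2}` is the only substantial point. Iterated integration in a direction `i` in
which the metric entry `c i` is nonzero yields a right inverse of the Laplacian that commutes with
`∂_k` for all `k ≠ i`. Hence a current `J` with `δJ = 0` is `□P` for some field `P`, and `δP` is
harmonic. In a second such direction `j`, the harmonic polynomial `δP` has a harmonic primitive, so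
that a harmonic field `Q` satisfies `δQ = δP`; then `δd (P - Q) = □ (P - Q) = J`.
-/

namespace PolynomialVectorField

section DifferentialOperators

variable {σ R : Type*} [CommRing R] {n : ℕ}

/-- The partial derivative `∂_i` on polynomials, as an element of the ring of endomorphisms. -/
noncomputable def partialDeriv (i : σ) : Module.End R (MvPolynomial σ R) :=
  (pderiv i).toLinearMap

theorem partialDeriv_apply (i : σ) (p : MvPolynomial σ R) : partialDeriv i p = pderiv i p := rfl

theorem commute_partialDeriv (i j : σ) :
    Commute (partialDeriv i : Module.End R (MvPolynomial σ R)) (partialDeriv j) := by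
  obtain rfl | hij := eq_or_ne i j
  · exact Commute.refl _
  · refine linearMap_ext fun m => LinearMap.ext fun a => ?_
    simp only [LinearMap.comp_apply, Module.End.mul_apply, partialDeriv_apply, pderiv_monomial,
      Finsupp.tsub_apply, Finsupp.single_eq_of_ne hij, Finsupp.single_eq_of_ne hij.symm, tsub_zero]
    rw [tsub_right_comm, mul_right_comm]

theorem isHomogeneous_partialDeriv (i : σ) {p : MvPolynomial σ R} (hp : p.IsHomogeneous n) :
    (partialDeriv i p).IsHomogeneous (n - 1) :=
  hp.pderiv

theorem partialDeriv_eq_zero (i : σ) {p : MvPolynomial σ R} (hp : p.IsHomogeneous 0) :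
    partialDeriv i p = 0 := by
  rw [totalDegree_eq_zero_iff_eq_C.mp (Nat.le_zero.mp hp.totalDegree_le)]
  exact pderiv_C

variable (σ R) in
/-- The gradient `d : p ↦ (∂_i p)_i`. -/
noncomputable def gradient : MvPolynomial σ R →ₗ[R] (σ → MvPolynomial σ R) :=
  LinearMap.pi partialDeriv

theorem gradient_apply (p : MvPolynomial σ R) (i : σ) : gradient σ R p i = partialDeriv i p := rfl

variable [Fintype σ] (c : σ → R)

/-- The Laplacian `∑ i, c i ∂_i²` of the diagonal (inverse) metric with entries `c i`; for the
Minkowski metric this is the d'Alembertian `□`. -/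
noncomputable def laplacian : Module.End R (MvPolynomial σ R) :=
  ∑ i, c i • partialDeriv i ^ 2

/-- The divergence `δ : P ↦ ∑ i, c i ∂_i P_i` of a polynomial vector field. -/
noncomputable def divergence : (σ → MvPolynomial σ R) →ₗ[R] MvPolynomial σ R :=
  ∑ i, c i • (partialDeriv i ∘ₗ LinearMap.proj i)

/-- The Maxwell operator `δd : P ↦ (□ P_i - ∂_i (δ P))_i` on polynomial vector fields. -/
noncomputable def maxwell : (σ → MvPolynomial σ R) →ₗ[R] (σ → MvPolynomial σ R) :=
  LinearMap.pi fun i => laplacian c ∘ₗ LinearMap.proj i - partialDeriv i ∘ₗ divergence c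

theorem laplacian_apply (p : MvPolynomial σ R) :
    laplacian c p = ∑ i, c i • partialDeriv i (partialDeriv i p) := by
  simp [laplacian, pow_two]

theorem divergence_apply (P : σ → MvPolynomial σ R) :
    divergence c P = ∑ i, c i • partialDeriv i (P i) := by
  simp [divergence]

theorem maxwell_apply (P : σ → MvPolynomial σ R) (i : σ) :
    maxwell c P i = laplacian c (P i) - partialDeriv i (divergence c P) := rfl

theorem divergence_single [DecidableEq σ] (i : σ) (p : MvPolynomial σ R) :
    divergence c (Pi.single i p) = c i • partialDeriv i p := by
  rw [divergence_apply, Finset.sum_eq_single i (fun k _ hk => by simp [hk]) (by simp),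
    Pi.single_eq_same]

theorem laplacian_eq_sub_laplacian_update [DecidableEq σ] (i : σ) :
    laplacian c = c i • partialDeriv i ^ 2 - laplacian (Function.update (-c) i 0) := by
  refine LinearMap.ext fun p => ?_
  have sum_update : laplacian (Function.update (-c) i 0) p =
      -∑ k ∈ Finset.univ.erase i, c k • partialDeriv k (partialDeriv k p) := by
    rw [laplacian_apply, ← Finset.add_sum_erase _ _ (Finset.mem_univ i), Function.update_self,
      zero_smul, zero_add, ← Finset.sum_neg_distrib]
    refine Finset.sum_congr rfl fun k hk => ?_
    rw [Function.update_of_ne (Finset.ne_of_mem_erase hk), Pi.neg_apply, neg_smul]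
  rw [LinearMap.sub_apply, sum_update, sub_neg_eq_add, LinearMap.smul_apply, pow_two,
    Module.End.mul_apply, laplacian_apply]
  exact (Finset.add_sum_erase _ (fun k => c k • partialDeriv k (partialDeriv k p))
    (Finset.mem_univ i)).symm

variable {c} in
theorem commute_laplacian {A : Module.End R (MvPolynomial σ R)}
    (hA : ∀ i, c i ≠ 0 → Commute (partialDeriv i) A) : Commute (laplacian c) A := by
  refine Commute.sum_left _ _ _ fun i _ => ?_
  by_cases hi : c i = 0
  · simp [hi]
  · exact ((hA i hi).pow_left 2).smul_left (c i)

theorem laplacian_partialDeriv (i : σ) (p : MvPolynomial σ R) :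
    laplacian c (partialDeriv i p) = partialDeriv i (laplacian c p) :=
  LinearMap.congr_fun (commute_laplacian fun k _ => commute_partialDeriv k i) p

theorem laplacian_divergence (P : σ → MvPolynomial σ R) :
    laplacian c (divergence c P) = divergence c fun i => laplacian c (P i) := by
  simp only [divergence_apply, map_sum, map_smul, laplacian_partialDeriv]

theorem divergence_gradient (p : MvPolynomial σ R) :
    divergence c (gradient σ R p) = laplacian c p := by
  simp only [divergence_apply, laplacian_apply, gradient_apply]

theorem maxwell_gradient (p : MvPolynomial σ R) : maxwell c (gradient σ R p) = 0 := by
  funext i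
  rw [maxwell_apply, divergence_gradient, gradient_apply, laplacian_partialDeriv, sub_self,
    Pi.zero_apply]

theorem divergence_maxwell (P : σ → MvPolynomial σ R) : divergence c (maxwell c P) = 0 := by
  have maxwell_eq : maxwell c P = (fun i => laplacian c (P i)) - gradient σ R (divergence c P) :=
    rfl
  rw [maxwell_eq, map_sub, divergence_gradient, laplacian_divergence, sub_self]

variable {c}

theorem isHomogeneous_laplacian {p : MvPolynomial σ R} (hp : p.IsHomogeneous n) :
    (laplacian c p).IsHomogeneous (n - 2) := by
  rw [laplacian_apply]
  exact Submodule.sum_smul_mem (homogeneousSubmodule σ R (n - 2)) c fun i _ =>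
    isHomogeneous_partialDeriv i (isHomogeneous_partialDeriv i hp)

theorem isHomogeneous_laplacian_pow (k : ℕ) {p : MvPolynomial σ R} (hp : p.IsHomogeneous n) :
    ((laplacian c ^ k) p).IsHomogeneous (n - 2 * k) := by
  induction k with
  | zero => simpa using hp
  | succ k ih =>
    rw [pow_succ', Module.End.mul_apply, mul_add_one, ← Nat.sub_sub]
    exact isHomogeneous_laplacian ih

theorem laplacian_eq_zero {p : MvPolynomial σ R} (hp : p.IsHomogeneous n) (hn : n < 2) :
    laplacian c p = 0 := by
  rw [laplacian_apply]
  refine Finset.sum_eq_zero fun i _ => ?_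
  have hip : (partialDeriv i p).IsHomogeneous 0 := by
    simpa [show n - 1 = 0 by omega] using isHomogeneous_partialDeriv i hp
  rw [partialDeriv_eq_zero i hip, smul_zero]

theorem laplacian_pow_eq_zero {k : ℕ} {p : MvPolynomial σ R} (hp : p.IsHomogeneous n)
    (hk : n < 2 * k) : (laplacian c ^ k) p = 0 := by
  obtain ⟨l, rfl⟩ : ∃ l, k = l + 1 := Nat.exists_eq_succ_of_ne_zero (by omega)
  rw [pow_succ', Module.End.mul_apply]
  exact laplacian_eq_zero (isHomogeneous_laplacian_pow l hp) (by omega)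

theorem isHomogeneous_divergence {P : σ → MvPolynomial σ R} (hP : ∀ i, (P i).IsHomogeneous n) :
    (divergence c P).IsHomogeneous (n - 1) := by
  rw [divergence_apply]
  exact Submodule.sum_smul_mem (homogeneousSubmodule σ R (n - 1)) c fun i _ =>
    isHomogeneous_partialDeriv i (hP i)

theorem divergence_eq_zero {P : σ → MvPolynomial σ R} (hP : ∀ i, (P i).IsHomogeneous 0) :
    divergence c P = 0 := by
  simp [divergence_apply, partialDeriv_eq_zero _ (hP _)]

theorem isHomogeneous_maxwell {P : σ → MvPolynomial σ R} (hP : ∀ i, (P i).IsHomogeneous n)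
    (i : σ) : (maxwell c P i).IsHomogeneous (n - 2) :=
  (isHomogeneous_laplacian (hP i)).sub
    (isHomogeneous_partialDeriv i (isHomogeneous_divergence hP))

theorem maxwell_eq_zero {P : σ → MvPolynomial σ R} (hP : ∀ i, (P i).IsHomogeneous n)
    (hn : n < 2) : maxwell c P = 0 := by
  have hdiv : (divergence c P).IsHomogeneous 0 := by
    simpa [show n - 1 = 0 by omega] using isHomogeneous_divergence hP
  funext i
  rw [maxwell_apply, laplacian_eq_zero (hP i) hn, partialDeriv_eq_zero i hdiv, sub_zero,
    Pi.zero_apply]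

end DifferentialOperators

section Antiderivative

variable {σ K : Type*} [Field K] {n : ℕ}

/-- The primitive in the variable `x^i` that vanishes at `x^i = 0`, as a linear operator. -/
noncomputable def antideriv (i : σ) : Module.End K (MvPolynomial σ K) :=
  (basisMonomials σ K).constr K fun m => monomial (m + Finsupp.single i 1) ((m i : K) + 1)⁻¹

theorem antideriv_monomial (i : σ) (m : σ →₀ ℕ) (a : K) :
    antideriv i (monomial m a) = monomial (m + Finsupp.single i 1) (a * ((m i : K) + 1)⁻¹) := by
  have monomial_eq : monomial m a = a • basisMonomials σ K m := by
    rw [coe_basisMonomials, smul_monomial, smul_eq_mul, mul_one]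
  rw [monomial_eq, map_smul, antideriv, Module.Basis.constr_basis, smul_monomial, smul_eq_mul]

theorem partialDeriv_mul_antideriv [CharZero K] (i : σ) :
    (partialDeriv i * antideriv i : Module.End K (MvPolynomial σ K)) = 1 := by
  refine linearMap_ext fun m => LinearMap.ext fun a => ?_
  have succ_ne_zero : (m i : K) + 1 ≠ 0 := Nat.cast_add_one_ne_zero (m i)
  simp [antideriv_monomial, partialDeriv_apply, pderiv_monomial, succ_ne_zero]

theorem partialDeriv_antideriv [CharZero K] (i : σ) (p : MvPolynomial σ K) :
    partialDeriv i (antideriv i p) = p :=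
  LinearMap.congr_fun (partialDeriv_mul_antideriv i) p

theorem commute_partialDeriv_antideriv {i k : σ} (h : k ≠ i) :
    Commute (partialDeriv k : Module.End K (MvPolynomial σ K)) (antideriv i) := by
  classical
  refine linearMap_ext fun m => LinearMap.ext fun a => ?_
  simp only [LinearMap.comp_apply, Module.End.mul_apply, partialDeriv_apply, antideriv_monomial,
    pderiv_monomial, Finsupp.add_apply, Finsupp.tsub_apply, Finsupp.single_eq_of_ne h,
    Finsupp.single_eq_of_ne h.symm, add_zero, tsub_zero, mul_right_comm]
  obtain hm | hm := eq_or_ne (m k) 0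
  · simp [hm]
  · rw [tsub_add_eq_add_tsub (Finsupp.single_le_iff.mpr (Nat.one_le_iff_ne_zero.mpr hm))]

theorem isHomogeneous_antideriv (i : σ) {p : MvPolynomial σ K} (hp : p.IsHomogeneous n) :
    (antideriv i p).IsHomogeneous (n + 1) := by
  rw [p.as_sum, map_sum]
  refine IsHomogeneous.sum _ _ _ fun m hm => ?_
  rw [antideriv_monomial]
  refine isHomogeneous_monomial _ ?_
  rw [map_add, Finsupp.degree_single, Finsupp.degree_apply, hp.degree_eq_sum_deg_support hm]

/-- The right inverse `a⁻¹ ∫∫ dx^i dx^i` of `a ∂_i²` for a scalar `a ≠ 0`. -/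
noncomputable def doublePrimitive (a : K) (i : σ) : Module.End K (MvPolynomial σ K) :=
  a⁻¹ • antideriv i ^ 2

theorem smul_partialDeriv_sq_mul_doublePrimitive [CharZero K] {a : K} (ha : a ≠ 0) (i : σ) :
    (a • partialDeriv i ^ 2) * doublePrimitive a i = 1 := by
  rw [doublePrimitive, smul_mul_smul_comm, mul_inv_cancel₀ ha, one_smul,
    pow_mul_pow_eq_one 2 (partialDeriv_mul_antideriv i)]

theorem commute_partialDeriv_doublePrimitive (a : K) {i k : σ} (h : k ≠ i) :
    Commute (partialDeriv k) (doublePrimitive a i) :=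
  ((commute_partialDeriv_antideriv h).pow_right 2).smul_right a⁻¹

theorem isHomogeneous_doublePrimitive (a : K) (i : σ) {p : MvPolynomial σ K}
    (hp : p.IsHomogeneous n) : (doublePrimitive a i p).IsHomogeneous (n + 2) := by
  rw [doublePrimitive, LinearMap.smul_apply, pow_two, Module.End.mul_apply]
  exact (homogeneousSubmodule σ K (n + 2)).smul_mem _
    (isHomogeneous_antideriv i (isHomogeneous_antideriv i hp))

end Antiderivative

section Surjectivity

theorem sub_mul_mul_geom_sum {A : Type*} [Ring A] {a b r : A} (har : a * r = 1)
    (hbr : Commute b r) (N : ℕ) :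
    (a - b) * (r * ∑ l ∈ Finset.range N, (r * b) ^ l) = 1 - (r * b) ^ N := by
  rw [← mul_neg_geom_sum, ← mul_assoc, sub_mul, har, hbr.eq]

variable {σ K : Type*} [Fintype σ] [Field K] [CharZero K] {c : σ → K} {n : ℕ}

/- With `r` the double primitive in `x^i` and `-b` the part of the Laplacian not involving `∂_i`,
the geometric series of `r * b` terminates on every polynomial, because `b` is locally
nilpotent. -/
theorem exists_rightInverse_laplacian {i : σ} (hi : c i ≠ 0) (n : ℕ) :
    ∃ S : Module.End K (MvPolynomial σ K), (∀ k ≠ i, Commute (partialDeriv k) S) ∧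
      ∀ p, p.IsHomogeneous n → (S p).IsHomogeneous (n + 2) ∧ laplacian c (S p) = p := by
  classical
  set b : Module.End K (MvPolynomial σ K) := laplacian (Function.update (-c) i 0)
  set r : Module.End K (MvPolynomial σ K) := doublePrimitive (c i) i
  have commute_r {k : σ} (hk : k ≠ i) : Commute (partialDeriv k) r :=
    commute_partialDeriv_doublePrimitive (c i) hk
  have commute_b (k : σ) : Commute (partialDeriv k) b :=
    (commute_laplacian fun l _ => commute_partialDeriv l k).symm
  have commute_br : Commute b r := commute_laplacian fun k hk =>
    commute_r fun hki => hk (by rw [hki, Function.update_self])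
  have hom_pow (l : ℕ) {p : MvPolynomial σ K} (hp : p.IsHomogeneous n) :
      (((r * b) ^ l) p).IsHomogeneous n := by
    induction l with
    | zero => simpa using hp
    | succ l ih =>
      have hom_step : (b (r (((r * b) ^ l) p))).IsHomogeneous n :=
        isHomogeneous_laplacian (isHomogeneous_doublePrimitive (c i) i ih)
      rw [pow_succ', Module.End.mul_apply]
      rwa [← Module.End.mul_apply, commute_br.eq] at hom_step
  refine ⟨r * ∑ l ∈ Finset.range (n + 1), (r * b) ^ l, fun k hk => ?_, fun p hp => ⟨?_, ?_⟩⟩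
  · exact (commute_r hk).mul_right <| Commute.sum_right _ _ _ fun l _ =>
      ((commute_r hk).mul_right (commute_b k)).pow_right l
  · rw [Module.End.mul_apply, LinearMap.sum_apply]
    exact isHomogeneous_doublePrimitive (c i) i
      ((homogeneousSubmodule σ K n).sum_mem fun l _ => hom_pow l hp)
  · have pow_eq_zero : ((r * b) ^ (n + 1)) p = 0 := by
      rw [commute_br.symm.mul_pow, Module.End.mul_apply,
        laplacian_pow_eq_zero hp (by omega), map_zero]
    rw [laplacian_eq_sub_laplacian_update c i, ← Module.End.mul_apply,
      sub_mul_mul_geom_sum (smul_partialDeriv_sq_mul_doublePrimitive hi i) commute_br,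
      LinearMap.sub_apply, pow_eq_zero, sub_zero, Module.End.one_apply]

theorem exists_isHomogeneous_laplacian_eq {i : σ} (hi : c i ≠ 0) {p : MvPolynomial σ K}
    (hp : p.IsHomogeneous n) :
    ∃ q : MvPolynomial σ K, q.IsHomogeneous (n + 2) ∧ laplacian c q = p :=
  let ⟨S, _, hS⟩ := exists_rightInverse_laplacian hi n
  ⟨S p, hS p hp⟩

theorem exists_harmonic_partialDeriv_eq {i j : σ} (hij : i ≠ j) (hi : c i ≠ 0)
    {p : MvPolynomial σ K} (hp : p.IsHomogeneous (n + 1)) (harmonic : laplacian c p = 0) :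
    ∃ q : MvPolynomial σ K, q.IsHomogeneous (n + 2) ∧ laplacian c q = 0 ∧
      partialDeriv j q = p := by
  obtain ⟨S, commute_S, hS⟩ := exists_rightInverse_laplacian hi n
  have hom_primitive : (antideriv j p).IsHomogeneous (n + 2) := isHomogeneous_antideriv j hp
  obtain ⟨hom_correction, laplacian_correction⟩ :=
    hS (laplacian c (antideriv j p)) (isHomogeneous_laplacian hom_primitive)
  have partialDeriv_correction : partialDeriv j (S (laplacian c (antideriv j p))) = 0 := by
    rw [← Module.End.mul_apply, (commute_S j hij.symm).eq, Module.End.mul_apply,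
      ← laplacian_partialDeriv, partialDeriv_antideriv, harmonic, map_zero]
  refine ⟨antideriv j p - S (laplacian c (antideriv j p)), hom_primitive.sub hom_correction,
    ?_, ?_⟩
  · rw [map_sub, laplacian_correction, sub_self]
  · rw [map_sub, partialDeriv_antideriv, partialDeriv_correction, sub_zero]

end Surjectivity

section Dimensions

theorem finrank_map_add_finrank_ker_inf {K V W : Type*} [DivisionRing K] [AddCommGroup V]
    [Module K V] [AddCommGroup W] [Module K W] (f : V →ₗ[K] W) (S : Submodule K V)
    [Module.Finite K S] :
    Module.finrank K (S.map f) + Module.finrank K (LinearMap.ker f ⊓ S : Submodule K V) =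
      Module.finrank K S := by
  have ker_equiv := Submodule.comapSubtypeEquivOfLe (inf_le_right : LinearMap.ker f ⊓ S ≤ S)
  rw [← (f.domRestrict S).finrank_range_add_finrank_ker, LinearMap.range_domRestrict,
    LinearMap.ker_domRestrict, ← ker_equiv.finrank_eq, Submodule.comap_inf,
    Submodule.comap_subtype_self, inf_top_eq]

theorem finrank_quotient_comap_add_finrank {K V : Type*} [DivisionRing K] [AddCommGroup V]
    [Module K V] {S T : Submodule K V} [Module.Finite K T] (h : S ≤ T) :
    Module.finrank K (T ⧸ S.comap T.subtype) + Module.finrank K S = Module.finrank K T := by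
  rw [← (Submodule.comapSubtypeEquivOfLe h).finrank_eq, Submodule.finrank_quotient_add_finrank]

/-- A product of submodules, as a submodule of the product module, is the product of the
corresponding modules. -/
def piEquiv {ι R : Type*} {M : ι → Type*} [Semiring R] [∀ i, AddCommMonoid (M i)]
    [∀ i, Module R (M i)] (S : ∀ i, Submodule R (M i)) :
    Submodule.pi Set.univ S ≃ₗ[R] ∀ i, S i where
  toFun x i := ⟨x.1 i, x.2 i trivial⟩
  invFun y := ⟨fun i => y i, fun i _ => (y i).2⟩
  map_add' _ _ := rfl
  map_smul' _ _ := rfl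

/-- The dimension `C(D - 1 + k, D - 1)` of the homogeneous polynomials of degree `k` in `D`
variables; an integer degree is allowed, the dimension being `0` for `k < 0`. -/
def homogeneousDim (D : ℕ) (k : ℤ) : ℤ :=
  chooseZ (D - 1 + k) (D - 1)

theorem homogeneousDim_eq_zero_of_neg {D : ℕ} (hD : 0 < D) {k : ℤ} (hk : k < 0) :
    homogeneousDim D k = 0 := by
  rw [homogeneousDim, chooseZ, ite_eq_right_iff]
  intro
  rw [Nat.choose_eq_zero_of_lt (by omega), Nat.cast_zero]

theorem homogeneousDim_natCast {D : ℕ} (hD : 0 < D) (k : ℕ) :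
    homogeneousDim D k = (D - 1 + k).choose k := by
  rw [homogeneousDim, ← Nat.cast_pred hD, ← Nat.cast_add, chooseZ, if_pos (Nat.cast_nonneg _),
    Int.toNat_natCast, Nat.choose_symm_add]

theorem factorial_mul_homogeneousDim {D : ℕ} (hD : 0 < D) (k : ℕ) :
    (k.factorial : ℤ) * homogeneousDim D k = D.ascFactorial k := by
  rw [homogeneousDim_natCast hD, ← Nat.cast_mul, ← Nat.ascFactorial_eq_factorial_mul_choose,
    Nat.sub_add_cancel hD]

theorem homogeneousDim_zero {D : ℕ} (hD : 0 < D) : homogeneousDim D 0 = 1 := by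
  simpa using factorial_mul_homogeneousDim hD 0

theorem homogeneousDim_one {D : ℕ} (hD : 0 < D) : homogeneousDim D 1 = D := by
  simpa [Nat.ascFactorial_succ] using factorial_mul_homogeneousDim hD 1

theorem two_mul_homogeneousDim_two {D : ℕ} (hD : 0 < D) :
    2 * homogeneousDim D 2 = (D + 1) * D := by
  simpa [Nat.ascFactorial_succ] using factorial_mul_homogeneousDim hD 2

theorem six_mul_homogeneousDim_three {D : ℕ} (hD : 0 < D) :
    6 * homogeneousDim D 3 = (D + 2) * ((D + 1) * D) := by
  simpa [Nat.ascFactorial_succ, Nat.factorial] using factorial_mul_homogeneousDim hD 3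

variable {σ R : Type*} [CommRing R]

instance [Finite σ] (n : ℕ) : Module.Finite R (homogeneousSubmodule σ R n) :=
  Module.Finite.iff_fg.mpr (homogeneousSubmodule_fg σ R n)

theorem finrank_homogeneousSubmodule [Nontrivial R] [Fintype σ] [Nonempty σ]
    (n : ℕ) : (Module.finrank R (homogeneousSubmodule σ R n) : ℤ) =
      homogeneousDim (Fintype.card σ) n := by
  classical
  have setOf_degree_eq : {m : σ →₀ ℕ | m.degree = n} =
      ↑(Finset.finsuppAntidiag (Finset.univ : Finset σ) n) := by
    ext m
    simp [Finsupp.degree_eq_sum]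
  rw [homogeneousSubmodule_eq_finsupp_supported, setOf_degree_eq,
    (AddMonoidAlgebra.supportedEquivFinsupp _).finrank_eq, Module.finrank_finsupp_self,
    ← Nat.card_eq_fintype_card, Nat.card_coe_set_eq, Set.ncard_coe_finset,
    Finset.card_finsuppAntidiag_nat_eq_choose, Finset.card_univ,
    homogeneousDim_natCast Fintype.card_pos, Nat.sub_add_comm Fintype.card_pos]

variable (σ R) in
/-- The polynomial vector fields that are homogeneous of degree `n`. -/
noncomputable def homogeneousFields (n : ℕ) : Submodule R (σ → MvPolynomial σ R) :=
  Submodule.pi Set.univ fun _ => homogeneousSubmodule σ R n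

theorem mem_homogeneousFields {n : ℕ} {P : σ → MvPolynomial σ R} :
    P ∈ homogeneousFields σ R n ↔ ∀ i, (P i).IsHomogeneous n := by
  simp [homogeneousFields]

theorem single_mem_homogeneousFields [DecidableEq σ] {n : ℕ} (j : σ)
    {p : MvPolynomial σ R} (hp : p.IsHomogeneous n) :
    Pi.single j p ∈ homogeneousFields σ R n := by
  refine mem_homogeneousFields.mpr fun i => ?_
  obtain rfl | hij := eq_or_ne i j
  · rwa [Pi.single_eq_same]
  · rw [Pi.single_eq_of_ne hij]
    exact isHomogeneous_zero σ R n

instance [Finite σ] (n : ℕ) : Module.Finite R (homogeneousFields σ R n) :=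
  Module.Finite.equiv (piEquiv _).symm

theorem finrank_homogeneousFields {K : Type*} [Field K] [Fintype σ] [Nonempty σ] (n : ℕ) :
    (Module.finrank K (homogeneousFields σ K n) : ℤ) =
      Fintype.card σ * homogeneousDim (Fintype.card σ) n := by
  rw [homogeneousFields, (piEquiv _).finrank_eq, Module.finrank_pi_fintype, Finset.sum_const,
    Finset.card_univ, smul_eq_mul, Nat.cast_mul, finrank_homogeneousSubmodule]

end Dimensions

section ExactSequence

variable {σ R : Type*} [Fintype σ] [CommRing R] (c : σ → R) (n : ℕ)

/-- The space `W_n` of homogeneous vector fields `P` of degree `n` with `δd P = 0`. -/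
noncomputable def maxwellSolutions : Submodule R (σ → MvPolynomial σ R) :=
  LinearMap.ker (maxwell c) ⊓ homogeneousFields σ R n

variable (σ R) in
/-- The space `G_n` of gradients of homogeneous polynomials of degree `n + 1`. -/
noncomputable def gradients : Submodule R (σ → MvPolynomial σ R) :=
  (homogeneousSubmodule σ R (n + 1)).map (gradient σ R)

/-- The degree-`n` part `W_n / G_n` of the cohomology `ker δd / im d` of vector fields. -/
abbrev maxwellCohomology : Type _ :=
  maxwellSolutions c n ⧸ (gradients σ R n).comap (maxwellSolutions c n).subtype

theorem gradients_le_maxwellSolutions : gradients σ R n ≤ maxwellSolutions c n := by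
  rintro _ ⟨p, hp, rfl⟩
  exact ⟨maxwell_gradient c p, mem_homogeneousFields.mpr fun i => isHomogeneous_partialDeriv i hp⟩

theorem map_divergence_homogeneousFields_zero :
    (homogeneousFields σ R 0).map (divergence c) = ⊥ :=
  LinearMap.le_ker_iff_map.mp fun _ hP => divergence_eq_zero (mem_homogeneousFields.mp hP)

variable {n} in
theorem map_maxwell_homogeneousFields_of_lt_two (hn : n < 2) :
    (homogeneousFields σ R n).map (maxwell c) = ⊥ :=
  LinearMap.le_ker_iff_map.mp fun _ hP => maxwell_eq_zero (mem_homogeneousFields.mp hP) hn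

instance {σ K : Type*} [Fintype σ] [Field K] (c : σ → K) (n : ℕ) :
    Module.Finite K (maxwellSolutions c n) :=
  Submodule.finiteDimensional_of_le (inf_le_right : maxwellSolutions c n ≤ homogeneousFields σ K n)

theorem ker_gradient_inf_homogeneousSubmodule (σ K : Type*) [Finite σ] [Field K] [CharZero K]
    (n : ℕ) :
    LinearMap.ker (gradient σ K) ⊓ homogeneousSubmodule σ K (n + 1) = ⊥ := by
  have := Fintype.ofFinite σ
  refine (Submodule.eq_bot_iff _).mpr fun p hp => ?_
  obtain ⟨gradient_eq, hom⟩ := hp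
  have euler : ∑ i, X i * partialDeriv i p = (n + 1) • p := hom.sum_X_mul_pderiv
  have partialDeriv_eq (i : σ) : partialDeriv i p = 0 := congrFun gradient_eq i
  simp only [partialDeriv_eq, mul_zero, Finset.sum_const_zero] at euler
  exact (smul_eq_zero_iff_right n.succ_ne_zero).mp euler.symm

variable {σ K : Type*} [Fintype σ] [Field K] [CharZero K] {c : σ → K} (n : ℕ) {i j : σ}

theorem map_divergence_homogeneousFields (hj : c j ≠ 0) :
    (homogeneousFields σ K (n + 1)).map (divergence c) = homogeneousSubmodule σ K n := by
  classical
  refine le_antisymm ?_ fun p hp => ?_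
  · rintro _ ⟨P, hP, rfl⟩
    exact isHomogeneous_divergence (mem_homogeneousFields.mp hP)
  · refine ⟨Pi.single j ((c j)⁻¹ • antideriv j p), single_mem_homogeneousFields j <|
      (homogeneousSubmodule σ K (n + 1)).smul_mem _ (isHomogeneous_antideriv j hp), ?_⟩
    rw [divergence_single, map_smul, smul_inv_smul₀ hj, partialDeriv_antideriv]

variable {n}

theorem exists_harmonic_divergence_eq (hij : i ≠ j) (hi : c i ≠ 0) (hj : c j ≠ 0)
    {p : MvPolynomial σ K} (hp : p.IsHomogeneous (n + 1)) (harmonic : laplacian c p = 0) :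
    ∃ Q ∈ homogeneousFields σ K (n + 2), (∀ k, laplacian c (Q k) = 0) ∧ divergence c Q = p := by
  classical
  obtain ⟨q, hq, harmonic_q, partialDeriv_q⟩ := exists_harmonic_partialDeriv_eq hij hi hp harmonic
  refine ⟨Pi.single j ((c j)⁻¹ • q), single_mem_homogeneousFields j <|
    (homogeneousSubmodule σ K (n + 2)).smul_mem _ hq, fun k => ?_, ?_⟩
  · rw [Pi.apply_single (fun _ => laplacian c) fun _ => map_zero _, map_smul, harmonic_q,
      smul_zero, Pi.single_zero, Pi.zero_apply]
  · rw [divergence_single, map_smul, smul_inv_smul₀ hj, partialDeriv_q]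

variable (n)

theorem map_maxwell_homogeneousFields (hij : i ≠ j) (hi : c i ≠ 0) (hj : c j ≠ 0) :
    (homogeneousFields σ K (n + 2)).map (maxwell c) =
      LinearMap.ker (divergence c) ⊓ homogeneousFields σ K n := by
  refine le_antisymm ?_ ?_
  · rintro _ ⟨P, hP, rfl⟩
    exact ⟨divergence_maxwell c P,
      mem_homogeneousFields.mpr <| isHomogeneous_maxwell (mem_homogeneousFields.mp hP)⟩
  · rintro J ⟨conserved, hJ⟩
    choose P hP laplacian_P using fun k =>
      exists_isHomogeneous_laplacian_eq hi (mem_homogeneousFields.mp hJ k)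
    have harmonic : laplacian c (divergence c P) = 0 := by
      rw [laplacian_divergence, funext laplacian_P, conserved]
    -- Correcting `P` by a harmonic field imposes the gauge `δP = 0`, in which `δd = □`.
    obtain ⟨Q, hQ, harmonic_Q, divergence_Q⟩ :=
      exists_harmonic_divergence_eq hij hi hj (isHomogeneous_divergence hP) harmonic
    refine ⟨P - Q, Submodule.sub_mem _ (mem_homogeneousFields.mpr hP) hQ, funext fun k => ?_⟩
    rw [maxwell_apply, map_sub (divergence c), divergence_Q, sub_self, map_zero, sub_zero,
      Pi.sub_apply, map_sub, laplacian_P, harmonic_Q, sub_zero]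

end ExactSequence

section GradedDimensions

/-- The dimension of `W_n / G_n` in `D` variables, as the Euler characteristic of the exact
sequence relating gradients, vector fields, currents `δd P` and their divergences. -/
def gradedDim (D n : ℕ) : ℤ :=
  D * homogeneousDim D n - homogeneousDim D (n + 1) -
    (D * homogeneousDim D (n - 2) - homogeneousDim D (n - 3))

theorem gradedDim_eq (D n : ℕ) :
    gradedDim D n = D * chooseZ ((D : ℤ) - 1 + n) (D - 1) + chooseZ ((D : ℤ) - 4 + n) (D - 1) -
      chooseZ ((D : ℤ) + n) (D - 1) - D * chooseZ ((D : ℤ) - 3 + n) (D - 1) := by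
  simp only [gradedDim, homogeneousDim]
  ring_nf

theorem gradedDim_zero {D : ℕ} (hD : 0 < D) : gradedDim D 0 = 0 := by
  simp [gradedDim, homogeneousDim_eq_zero_of_neg hD, homogeneousDim_zero hD, homogeneousDim_one hD]

theorem two_mul_gradedDim_one {D : ℕ} (hD : 0 < D) : 2 * gradedDim D 1 = D * (D - 1) := by
  have gradedDim_one : gradedDim D 1 = D * D - homogeneousDim D 2 := by
    norm_num [gradedDim, homogeneousDim_eq_zero_of_neg hD, homogeneousDim_one hD]
  linear_combination 2 * gradedDim_one - two_mul_homogeneousDim_two hD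

theorem three_mul_gradedDim_two {D : ℕ} (hD : 0 < D) :
    3 * gradedDim D 2 = D * (D - 2) * (D + 2) := by
  have gradedDim_two : gradedDim D 2 = D * homogeneousDim D 2 - homogeneousDim D 3 - D := by
    norm_num [gradedDim, homogeneousDim_eq_zero_of_neg hD, homogeneousDim_zero hD]
  refine mul_left_cancel₀ two_ne_zero ?_
  linear_combination 6 * gradedDim_two + 3 * D * two_mul_homogeneousDim_two hD -
    six_mul_homogeneousDim_three hD

theorem finrank_gradients (σ K : Type*) [Fintype σ] [Nonempty σ] [Field K] [CharZero K] (n : ℕ) :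
    (Module.finrank K (gradients σ K n) : ℤ) = homogeneousDim (Fintype.card σ) (n + 1) := by
  have rank_nullity :=
    finrank_map_add_finrank_ker_inf (gradient σ K) (homogeneousSubmodule σ K (n + 1))
  rw [ker_gradient_inf_homogeneousSubmodule, finrank_bot, add_zero] at rank_nullity
  rw [gradients, rank_nullity, finrank_homogeneousSubmodule, Nat.cast_succ]

variable {σ K : Type*} [Fintype σ] [Field K] [CharZero K] {c : σ → K} {i j : σ}

theorem finrank_map_divergence (hj : c j ≠ 0) (n : ℕ) :
    (Module.finrank K ((homogeneousFields σ K n).map (divergence c)) : ℤ) =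
      homogeneousDim (Fintype.card σ) (n - 1) := by
  have : Nonempty σ := ⟨j⟩
  cases n with
  | zero =>
    rw [map_divergence_homogeneousFields_zero, finrank_bot,
      homogeneousDim_eq_zero_of_neg Fintype.card_pos (by simp), Nat.cast_zero]
  | succ n =>
    rw [map_divergence_homogeneousFields n hj, finrank_homogeneousSubmodule, Nat.cast_succ,
      add_sub_cancel_right]

theorem finrank_map_maxwell (hij : i ≠ j) (hi : c i ≠ 0) (hj : c j ≠ 0) (n : ℕ) :
    (Module.finrank K ((homogeneousFields σ K n).map (maxwell c)) : ℤ) =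
      Fintype.card σ * homogeneousDim (Fintype.card σ) (n - 2) -
        homogeneousDim (Fintype.card σ) (n - 3) := by
  have : Nonempty σ := ⟨j⟩
  obtain hn | hn := lt_or_ge n 2
  · rw [map_maxwell_homogeneousFields_of_lt_two c hn, finrank_bot,
      homogeneousDim_eq_zero_of_neg Fintype.card_pos (by omega),
      homogeneousDim_eq_zero_of_neg Fintype.card_pos (by omega), mul_zero, sub_zero, Nat.cast_zero]
  · obtain ⟨m, rfl⟩ := Nat.exists_eq_add_of_le' hn
    have rank_nullity := finrank_map_add_finrank_ker_inf (divergence c) (homogeneousFields σ K m)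
    zify at rank_nullity
    rw [finrank_map_divergence hj, finrank_homogeneousFields] at rank_nullity
    rw [map_maxwell_homogeneousFields m hij hi hj, eq_sub_of_add_eq' rank_nullity]
    rw [show ((m + 2 : ℕ) : ℤ) - 2 = m by omega, show ((m + 2 : ℕ) : ℤ) - 3 = m - 1 by omega]

theorem finrank_maxwellCohomology (hij : i ≠ j) (hi : c i ≠ 0) (hj : c j ≠ 0) (n : ℕ) :
    (Module.finrank K (maxwellCohomology c n) : ℤ) = gradedDim (Fintype.card σ) n := by
  have : Nonempty σ := ⟨j⟩
  have rank_nullity := finrank_map_add_finrank_ker_inf (maxwell c) (homogeneousFields σ K n)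
  have finrank_quotient := finrank_quotient_comap_add_finrank (gradients_le_maxwellSolutions c n)
  zify at rank_nullity finrank_quotient
  rw [finrank_map_maxwell hij hi hj, finrank_homogeneousFields] at rank_nullity
  rw [finrank_gradients] at finrank_quotient
  rw [gradedDim, eq_sub_of_add_eq finrank_quotient, maxwellSolutions,
    eq_sub_of_add_eq' rank_nullity]
  ring

theorem finrank_maxwellCohomology_zero (hij : i ≠ j) (hi : c i ≠ 0) (hj : c j ≠ 0) :
    Module.finrank K (maxwellCohomology c 0) = 0 := by
  have : Nonempty σ := ⟨j⟩
  exact_mod_cast (finrank_maxwellCohomology hij hi hj 0).trans (gradedDim_zero Fintype.card_pos)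

theorem finrank_maxwellCohomology_one (hij : i ≠ j) (hi : c i ≠ 0) (hj : c j ≠ 0) :
    Module.finrank K (maxwellCohomology c 1) = Fintype.card σ * (Fintype.card σ - 1) / 2 := by
  have two_le_card : 2 ≤ Fintype.card σ := Fintype.one_lt_card_iff.mpr ⟨i, j, hij⟩
  refine Nat.eq_div_of_mul_eq_right two_ne_zero ?_
  zify [one_le_two.trans two_le_card]
  rw [finrank_maxwellCohomology hij hi hj, two_mul_gradedDim_one (by omega)]

theorem finrank_maxwellCohomology_two (hij : i ≠ j) (hi : c i ≠ 0) (hj : c j ≠ 0) :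
    Module.finrank K (maxwellCohomology c 2) =
      Fintype.card σ * (Fintype.card σ - 2) * (Fintype.card σ + 2) / 3 := by
  have two_le_card : 2 ≤ Fintype.card σ := Fintype.one_lt_card_iff.mpr ⟨i, j, hij⟩
  refine Nat.eq_div_of_mul_eq_right three_ne_zero ?_
  zify [two_le_card]
  rw [finrank_maxwellCohomology hij hi hj, three_mul_gradedDim_two (by omega)]

end GradedDimensions

section Minkowski

/-- The diagonal `(-1, 1, …, 1)` of the Minkowski metric. -/
def minkowski (D : ℕ) (μ : Fin D) : ℂ :=
  if (μ : ℕ) = 0 then -1 else 1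

theorem minkowski_ne_zero {D : ℕ} (μ : Fin D) : minkowski D μ ≠ 0 := by
  unfold minkowski
  split_ifs <;> simp

theorem boxOp_eq_laplacian (D : ℕ) : boxOp D = laplacian (minkowski D) := by
  simp only [boxOp, laplacian, pow_two]
  rfl

theorem deltaDOp_eq_maxwell (D : ℕ) : deltaDOp D = maxwell (minkowski D) := by
  rw [deltaDOp, boxOp_eq_laplacian]
  rfl

theorem Wn_eq_maxwellSolutions (D : ℕ) : Wn D = maxwellSolutions (minkowski D) := by
  funext n
  rw [Wn, deltaDOp_eq_maxwell]
  rfl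

theorem Gn_eq_gradients (D : ℕ) : Gn D = gradients (Fin D) ℂ := rfl

end Minkowski

end PolynomialVectorField

open PolynomialVectorField in
theorem chiral_ghost_one_graded_dimensions_general {σ K : Type*} [Fintype σ] [Field K] [CharZero K]
    (c : σ → K) {i j : σ} (hij : i ≠ j) (hi : c i ≠ 0) (hj : c j ≠ 0) :
    (∀ n, gradients σ K n ≤ maxwellSolutions c n) ∧
    (∀ n, Module.Finite K (maxwellCohomology c n)) ∧
    (∀ n : ℕ, (Module.finrank K (maxwellCohomology c n) : ℤ) =
      Fintype.card σ * chooseZ ((Fintype.card σ : ℤ) - 1 + n) (Fintype.card σ - 1)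
        + chooseZ ((Fintype.card σ : ℤ) - 4 + n) (Fintype.card σ - 1)
        - chooseZ ((Fintype.card σ : ℤ) + n) (Fintype.card σ - 1)
        - Fintype.card σ * chooseZ ((Fintype.card σ : ℤ) - 3 + n) (Fintype.card σ - 1)) ∧
    Module.finrank K (maxwellCohomology c 0) = 0 ∧
    Module.finrank K (maxwellCohomology c 1) = Fintype.card σ * (Fintype.card σ - 1) / 2 ∧
    Module.finrank K (maxwellCohomology c 2) =
      Fintype.card σ * (Fintype.card σ - 2) * (Fintype.card σ + 2) / 3 :=
  ⟨gradients_le_maxwellSolutions c, fun _ => inferInstance,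
    fun n => (finrank_maxwellCohomology hij hi hj n).trans (gradedDim_eq _ n),
    finrank_maxwellCohomology_zero hij hi hj, finrank_maxwellCohomology_one hij hi hj,
    finrank_maxwellCohomology_two hij hi hj⟩

/-- Graded dimensions `Gr_{-n} H¹` of the ghost number one cohomology of the zero-momentum
chiral extended complex, via `E₃⁽¹⁾ = ker(δd, Ω¹)/dΩ⁰`:
`dim W_n/G_n = D·C(D−1+n, D−1) + C(D−4+n, D−1) − C(D+n, D−1) − D·C(D−3+n, D−1)`,
which equals `0` for `n = 0`, `D(D−1)/2` for `n = 1` and `D(D−2)(D+2)/3` for `n = 2`. -/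
theorem chiral_ghost_one_graded_dimensions (D : ℕ) (hD : 2 ≤ D) :
    (∀ n : ℕ, Gn D n ≤ Wn D n) ∧
    (∀ n : ℕ, Module.Finite ℂ (Wn D n ⧸ (Gn D n).comap (Wn D n).subtype)) ∧
    (∀ n : ℕ,
      (Module.finrank ℂ (Wn D n ⧸ (Gn D n).comap (Wn D n).subtype) : ℤ)
        = (D : ℤ) * chooseZ ((D : ℤ) - 1 + n) (D - 1)
          + chooseZ ((D : ℤ) - 4 + n) (D - 1)
          - chooseZ ((D : ℤ) + n) (D - 1)
          - (D : ℤ) * chooseZ ((D : ℤ) - 3 + n) (D - 1)) ∧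
    Module.finrank ℂ (Wn D 0 ⧸ (Gn D 0).comap (Wn D 0).subtype) = 0 ∧
    Module.finrank ℂ (Wn D 1 ⧸ (Gn D 1).comap (Wn D 1).subtype) = D * (D - 1) / 2 ∧
    Module.finrank ℂ (Wn D 2 ⧸ (Gn D 2).comap (Wn D 2).subtype)
      = D * (D - 2) * (D + 2) / 3 := by
  have time_ne_space : (⟨0, by omega⟩ : Fin D) ≠ ⟨1, hD⟩ := by simp
  rw [PolynomialVectorField.Wn_eq_maxwellSolutions, PolynomialVectorField.Gn_eq_gradients]
  simpa only [Fintype.card_fin] using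
    chiral_ghost_one_graded_dimensions_general (PolynomialVectorField.minkowski D) time_ne_space
      (PolynomialVectorField.minkowski_ne_zero _) (PolynomialVectorField.minkowski_ne_zero _)
end
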